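/- There is a constant C (depending on n, Ω, χ, ψ) such that for every bounded Lipschitz continuous f : ℝⁿ → ℝ the following holds: for every x ∈ ℝⁿ the principal-value limit Tf(x) = lim_{ε→0⁺} ∫_{{y : |x−y|>ε}} H(x,y) f(y) dy exists, and ‖Tf‖_{bmo} ≤ C ‖f‖_{bmo}. -/

import Mathlib

open MeasureTheory Metric Set Filter Topology

/-- The local BMO norm
`‖g‖_{bmo} = sup_{0 < r ≤ 1} ⨍_{B(x,r)} |g − g_{B(x,r)}| + sup_{r > 1} ⨍_{B(x,r)} |g|`. -/
noncomputable def bmoNorm (n : ℕ) (g : EuclideanSpace ℝ (Fin n) → ℝ) : ℝ :=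
  (⨆ p : {p : EuclideanSpace ℝ (Fin n) × ℝ // 0 < p.2 ∧ p.2 ≤ 1},
    ⨍ y in Metric.ball p.1.1 p.1.2, |g y - ⨍ z in Metric.ball p.1.1 p.1.2, g z|) +
  ⨆ p : {p : EuclideanSpace ℝ (Fin n) × ℝ // 1 < p.2},
    ⨍ y in Metric.ball p.1.1 p.1.2, |g y|

open scoped BoundedContinuousFunction


theorem cotlar_growth {E : Type*} [NormedAddCommGroup E] [NormedSpace ℝ E] {ι : Type} [Fintype ι]
    (a b : ι → E →L[ℝ] E)
    (c : ι → ι → ℝ) (hc : ∀ i j, 0 ≤ c i j)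
    (hba : ∀ i j, ‖b i * a j‖ ≤ c i j ^ 2) (hab : ∀ i j, ‖a i * b j‖ ≤ c i j ^ 2)
    (M : ℝ) (hM : ∀ i, ∑ j, c i j ≤ M) (c0 : ℝ) (hc0 : ∀ i, ‖a i‖ ≤ c0) (hc00 : 0 ≤ c0)
    (hM0 : 0 ≤ M) (m : ℕ) :
    ∃ (κ : Type) (_ : Fintype κ) (X : κ → E →L[ℝ] E) (δ : ι → κ → ℝ) (α : κ → ℝ) (γ : ι → κ → ℝ),
      ∑ w, X w = ((∑ i, b i) * (∑ i, a i)) ^ m ∧ (∀ w, ‖X w‖ ≤ α w) ∧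
      (∀ j w, ‖a j * X w‖ ≤ γ j w) ∧ (∀ w, 0 ≤ α w) ∧ (∀ j w, 0 ≤ γ j w) ∧
      (∀ j w, 0 ≤ δ j w) ∧
      (∀ j w, δ j w ^ 2 = c0 * α w * γ j w) ∧ ∀ j, ∑ w, δ j w ≤ c0 * (M ^ 2) ^ m := by
  induction m with
  | zero =>
    refine ⟨Unit, inferInstance, fun _ => 1, fun _ _ => c0, fun _ => 1, fun _ _ => c0, ?_, ?_, ?_, ?_, ?_, ?_, ?_, ?_⟩
    · simp
    · intro w; exact ContinuousLinearMap.norm_id_le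
    · intro j w; simpa using hc0 j
    · simp
    · simp [hc00]
    · simp [hc00]
    · intro j w; ring
    · simp
  | succ m ih =>
    obtain ⟨κ, _, X, δ, α, γ, h1, h2, h3, h4, h5, h6, h7, h8⟩ := ih
    refine ⟨(ι × ι) × κ, inferInstance, fun w => b w.1.1 * a w.1.2 * X w.2,
      fun j w => c j w.1.1 * (c w.1.1 w.1.2 * δ w.1.2 w.2), fun w => c w.1.1 w.1.2 ^ 2 * α w.2,
      fun j w => c j w.1.1 ^ 2 * γ w.1.2 w.2, ?_, ?_, ?_, ?_, ?_, ?_, ?_, ?_⟩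
    · rw [pow_succ', ← h1, Finset.sum_mul_sum, Fintype.sum_prod_type, Fintype.sum_prod_type,
        Finset.sum_mul]
      refine Finset.sum_congr rfl fun i _ => ?_
      rw [Finset.sum_mul]
      refine Finset.sum_congr rfl fun j _ => ?_
      rw [Finset.mul_sum]
    · rintro ⟨⟨i, k⟩, w⟩
      exact (norm_mul_le _ _).trans (mul_le_mul (hba i k) (h2 w) (norm_nonneg _) (sq_nonneg _))
    · rintro j ⟨⟨i, k⟩, w⟩
      have : a j * (b i * a k * X w) = (a j * b i) * (a k * X w) := by simp only [mul_assoc]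
      simp only [this]
      exact (norm_mul_le _ _).trans (mul_le_mul (hab j i) (h3 k w) (norm_nonneg _) (sq_nonneg _))
    · intro w; exact mul_nonneg (sq_nonneg _) (h4 _)
    · intro j w; exact mul_nonneg (sq_nonneg _) (h5 _ _)
    · intro j w; exact mul_nonneg (hc _ _) (mul_nonneg (hc _ _) (h6 _ _))
    · rintro j ⟨⟨i, k⟩, w⟩
      simp only [mul_pow, h7]; ring
    · intro j
      have e : c0 * (M ^ 2) ^ (m + 1) = M * (M * (c0 * (M ^ 2) ^ m)) := by ring
      have hp : 0 ≤ c0 * (M ^ 2) ^ m := by positivity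
      rw [e, Fintype.sum_prod_type, Fintype.sum_prod_type]
      simp only [← Finset.mul_sum]
      calc ∑ i, c j i * ∑ k, c i k * ∑ w, δ k w
          ≤ ∑ i, c j i * (M * (c0 * (M ^ 2) ^ m)) := by
            refine Finset.sum_le_sum fun i _ => mul_le_mul_of_nonneg_left ?_ (hc _ _)
            calc ∑ k, c i k * ∑ w, δ k w ≤ ∑ k, c i k * (c0 * (M ^ 2) ^ m) :=
                  Finset.sum_le_sum fun k _ => mul_le_mul_of_nonneg_left (h8 k) (hc _ _)
              _ ≤ _ := by
                rw [← Finset.sum_mul]; exact mul_le_mul_of_nonneg_right (hM i) hp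
        _ ≤ _ := by
          rw [← Finset.sum_mul]
          exact mul_le_mul_of_nonneg_right (hM j) (by positivity)

/-- Cotlar-Stein-Krein lemma. -/
theorem cotlar {E : Type*} [NormedAddCommGroup E] [NormedSpace ℝ E] {ι : Type} [Fintype ι]
    (B : E →ₗ[ℝ] E →ₗ[ℝ] ℝ) (hsymm : ∀ f g, B f g = B g f) (hpos : ∀ f, 0 ≤ B f f)
    (D : ℝ) (hD : ∀ f g, B f g ≤ D * ‖f‖ * ‖g‖) (hD0 : 0 ≤ D)
    (a b : ι → E →L[ℝ] E) (hadj : ∀ i f g, B (a i f) g = B f (b i g))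
    (c : ι → ι → ℝ) (hc : ∀ i j, 0 ≤ c i j)
    (hba : ∀ i j, ‖b i * a j‖ ≤ c i j ^ 2) (hab : ∀ i j, ‖a i * b j‖ ≤ c i j ^ 2)
    (M : ℝ) (hM : ∀ i, ∑ j, c i j ≤ M) (hM0 : 0 ≤ M) (f : E) :
    B ((∑ i, a i) f) ((∑ i, a i) f) ≤ M ^ 2 * B f f := by
  have mulA : ∀ (X Y : E →L[ℝ] E) (z : E), (X * Y) z = X (Y z) := fun _ _ _ => rfl
  set c0 : ℝ := ∑ i, ‖a i‖
  have hc00 : 0 ≤ c0 := Finset.sum_nonneg fun i _ => norm_nonneg _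
  have hc0 : ∀ i, ‖a i‖ ≤ c0 := fun i =>
    Finset.single_le_sum (f := fun i => ‖a i‖) (fun i _ => norm_nonneg _) (Finset.mem_univ i)
  set S := ∑ i, a i with hS
  set S' := ∑ i, b i with hS'
  set P := S' * S with hP
  have hadjS : ∀ f g, B (S f) g = B f (S' g) := by
    intro f g
    simp only [hS, hS', sum_apply, map_sum, LinearMap.sum_apply, hadj]
  have hadjS2 : ∀ f g, B (S' f) g = B f (S g) := by
    intro f g; rw [hsymm, ← hadjS, hsymm]
  have hgrow : ∃ G : ℝ, 0 ≤ G ∧ ∀ m : ℕ, ‖P ^ (m + 1)‖ ≤ G * (M ^ 2) ^ m := by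
    refine ⟨‖S'‖ * ∑ i : ι, c0, by positivity, fun m => ?_⟩
    have key : ∀ j, ‖a j * P ^ m‖ ≤ c0 * (M ^ 2) ^ m := by
      intro j
      obtain ⟨κ, _, X, δ, α, γ, h1, h2, h3, h4, h5, h6, h7, h8⟩ :=
        cotlar_growth a b c hc hba hab M hM c0 hc0 hc00 hM0 m
      rw [← h1, Finset.mul_sum]
      refine (norm_sum_le _ _).trans ((Finset.sum_le_sum fun w _ => ?_).trans (h8 j))
      refine abs_le_of_sq_le_sq' ?_ (h6 j w) |>.2
      rw [h7, sq]
      refine mul_le_mul ((norm_mul_le _ _).trans (mul_le_mul (hc0 j) (h2 w) (norm_nonneg _) hc00))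
        (h3 j w) (norm_nonneg _) (mul_nonneg hc00 (h4 w))
    rw [pow_succ', hP, mul_assoc, mul_assoc]
    refine (norm_mul_le _ _).trans (mul_le_mul_of_nonneg_left ?_ (norm_nonneg _))
    rw [← hP]
    nth_rewrite 1 [hS]
    rw [Finset.sum_mul, Finset.sum_mul]
    exact (norm_sum_le _ _).trans (Finset.sum_le_sum fun j _ => key j)
  obtain ⟨G, hG0, hG⟩ := hgrow
  have hPsymm : ∀ f g, B (P f) g = B f (P g) := by
    intro f g
    simp only [hP, mulA, hadjS2, hadjS]
  have hPs : ∀ m f g, B ((P ^ m) f) g = B f ((P ^ m) g) := by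
    intro m
    induction m with
    | zero => intro f g; simp
    | succ m ih =>
      intro f g
      rw [pow_succ, mulA, ih, hPsymm, ← mulA,
        ← pow_succ', pow_succ]
  have CS : ∀ f g, B f g ^ 2 ≤ B f f * B g g := by
    intro f g
    have := LinearMap.BilinForm.apply_mul_apply_le_of_forall_zero_le B hpos f g
    rw [hsymm g f] at this
    nlinarith
  have CSS : ∀ f g, B (S f) (S g) ^ 2 ≤ B (S f) (S f) * B (S g) (S g) := fun f g => CS _ _
  set μ : ℕ → ℝ := fun m => B ((P ^ m) f) f with hμ
  have hB : ∀ k l, B ((P ^ k) f) ((P ^ l) f) = μ (k + l) := by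
    intro k l
    rw [hμ]; simp only
    rw [hsymm, hPs, hsymm, ← mulA, ← pow_add, add_comm]
  have hBS : ∀ k l, B (S ((P ^ k) f)) (S ((P ^ l) f)) = μ (k + l + 1) := by
    intro k l
    rw [hadjS, ← mulA, ← hP, ← mulA,
      ← pow_succ', hB, add_assoc]
  have hlog : ∀ m, μ (m + 1) ^ 2 ≤ μ m * μ (m + 2) := by
    intro m
    rcases Nat.even_or_odd m with ⟨k, rfl⟩ | ⟨k, rfl⟩
    · have := CS ((P ^ k) f) ((P ^ (k + 1)) f)
      simp only [hB] at this
      convert this using 3 <;> ring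
    · have := CS (S ((P ^ k) f)) (S ((P ^ (k + 1)) f))
      simp only [hBS] at this
      convert this using 3 <;> ring
  have hμ0 : μ 0 = B f f := by simp [hμ]
  have hμ1 : μ 1 = B (S f) (S f) := by
    have := hBS 0 0; simpa using this.symm
  have hgr : ∀ m, μ (m + 1) ≤ (D * ‖f‖ * ‖f‖ * G) * (M ^ 2) ^ m := by
    intro m
    calc μ (m + 1) ≤ D * ‖(P ^ (m + 1)) f‖ * ‖f‖ := hD _ _
      _ ≤ D * (G * (M ^ 2) ^ m * ‖f‖) * ‖f‖ := by
        gcongr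
        exact ((P ^ (m + 1)).le_opNorm f).trans (mul_le_mul_of_nonneg_right (hG m) (norm_nonneg _))
      _ = _ := by ring
  rw [← hμ0, ← hμ1]
  by_contra! hcon
  have h00 : 0 ≤ μ 0 := hμ0 ▸ hpos f
  have h0 : 0 < μ 0 := by
    rcases h00.lt_or_eq with h | h
    · exact h
    · have := hlog 0
      rw [← h] at this hcon
      simp only [zero_add, zero_mul, mul_zero] at this hcon
      nlinarith
  set r := μ 1 / μ 0 with hr
  have hrM : M ^ 2 < r := by rw [hr, lt_div_iff₀ h0]; exact hcon
  have hr0 : 0 < r := lt_of_le_of_lt (sq_nonneg _) hrM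
  have hstep : ∀ m, 0 < μ m ∧ r * μ m ≤ μ (m + 1) := by
    intro m
    induction m with
    | zero => exact ⟨h0, by rw [hr, div_mul_cancel₀ _ h0.ne']⟩
    | succ m ih =>
      have hp : 0 < μ (m + 1) := lt_of_lt_of_le (mul_pos hr0 ih.1) ih.2
      refine ⟨hp, ?_⟩
      have := hlog m
      have h3 : μ m * (r * μ (m + 1)) ≤ μ m * μ (m + 2) := by nlinarith
      exact le_of_mul_le_mul_left h3 ih.1
  have hlow : ∀ m, μ 0 * r ^ m ≤ μ m := by
    intro m
    induction m with
    | zero => simp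
    | succ m ih => 
      have := (hstep m).2
      rw [pow_succ]; nlinarith
  have hq : Tendsto (fun m : ℕ => (D * ‖f‖ * ‖f‖ * G) * (M ^ 2 / r) ^ m) atTop (𝓝 ((D * ‖f‖ * ‖f‖ * G) * 0)) :=
    (tendsto_pow_atTop_nhds_zero_of_lt_one (by positivity) (by rwa [div_lt_one hr0])).const_mul _
  have : μ 0 * r ≤ (D * ‖f‖ * ‖f‖ * G) * 0 := by
    refine ge_of_tendsto' hq fun m => ?_
    have := (hlow (m + 1)).trans (hgr m)
    rw [div_pow, ← mul_div_assoc (D * ‖f‖ * ‖f‖ * G), le_div_iff₀ (by positivity)]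
    calc _ = μ 0 * r ^ (m + 1) := by ring
      _ ≤ _ := this
  have := mul_pos h0 hr0
  linarith


def Cube {n : ℕ} (c : Fin n → ℝ) (h : ℝ) : Set (EuclideanSpace ℝ (Fin n)) :=
  {x | ∀ i, c i ≤ x i ∧ x i < c i + h}

theorem cube_eq {n : ℕ} (c : Fin n → ℝ) (h : ℝ) :
    Cube c h = (@WithLp.ofLp 2 (Fin n → ℝ)) ⁻¹' (Set.univ.pi fun i => Ico (c i) (c i + h)) := by
  ext x; simp [Cube]

theorem cube_meas {n : ℕ} (c : Fin n → ℝ) (h : ℝ) : MeasurableSet (Cube c h) := by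
  rw [cube_eq]
  exact (PiLp.volume_preserving_ofLp (Fin n)).measurable
    (MeasurableSet.univ_pi fun i => measurableSet_Ico)

theorem cube_vol {n : ℕ} (c : Fin n → ℝ) {h : ℝ} (hh : 0 ≤ h) :
    volume (Cube c h) = ENNReal.ofReal (h ^ n) := by
  rw [cube_eq, (PiLp.volume_preserving_ofLp (Fin n)).measure_preimage
    (MeasurableSet.univ_pi fun i => measurableSet_Ico).nullMeasurableSet, Real.volume_pi_Ico]
  simp [ENNReal.ofReal_pow hh]

theorem cube_vol_real {n : ℕ} (c : Fin n → ℝ) {h : ℝ} (hh : 0 ≤ h) :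
    volume.real (Cube c h) = h ^ n := by
  rw [Measure.real, cube_vol c hh, ENNReal.toReal_ofReal (by positivity)]

theorem cube_norm {n : ℕ} (c : Fin n → ℝ) {h : ℝ} {x y : EuclideanSpace ℝ (Fin n)}
    (hx : x ∈ Cube c h) (hy : y ∈ Cube c h) : ‖x - y‖ ≤ n * h := by
  rcases Nat.eq_zero_or_pos n with rfl | hn
  · have : x = y := Subsingleton.elim _ _
    simp [this]
  have hh : 0 ≤ h := by
    have := hx ⟨0, hn⟩; linarith
  rw [EuclideanSpace.norm_eq]
  refine Real.sqrt_le_iff.2 ⟨by positivity, ?_⟩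
  calc ∑ i, ‖(x - y) i‖ ^ 2 ≤ ∑ i : Fin n, h ^ 2 := by
        refine Finset.sum_le_sum fun i _ => ?_
        have h1 := hx i
        have h2 := hy i
        have : ‖(x - y) i‖ ≤ h := by
          simp only [PiLp.sub_apply, Real.norm_eq_abs]
          rw [abs_le]; constructor <;> linarith
        gcongr
    _ = n * h ^ 2 := by simp
    _ ≤ (n * h) ^ 2 := by
      have : (1:ℝ) ≤ n := by exact_mod_cast hn
      nlinarith [mul_nonneg (mul_nonneg (Nat.cast_nonneg (α := ℝ) n) (sub_nonneg.2 this)) (sq_nonneg h)]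

theorem cube_subset_ball {n : ℕ} (c : Fin n → ℝ) {h : ℝ} (hh : 0 < h) :
    Cube c h ⊆ ball (WithLp.toLp 2 c) ((n + 1) * h) := by
  intro y hy
  have : WithLp.toLp 2 c ∈ Cube c h := by intro i; simp [hh]
  rw [mem_ball, dist_eq_norm]
  have := cube_norm c hy this
  linarith

theorem ball_subset_cube {n : ℕ} (x : EuclideanSpace ℝ (Fin n)) (r : ℝ) :
    ball x r ⊆ Cube (fun i => x i - r) (2 * r) := by
  intro y hy i
  rw [mem_ball, dist_eq_norm] at hy
  have := (PiLp.norm_apply_le (y - x) i).trans_lt hy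
  rw [Real.norm_eq_abs, PiLp.sub_apply, abs_lt] at this
  constructor <;> linarith

theorem cont_int_cube {n : ℕ} {F : EuclideanSpace ℝ (Fin n) → ℝ} (hF : Continuous F)
    (c : Fin n → ℝ) {h : ℝ} (hh : 0 < h) : IntegrableOn F (Cube c h) :=
  (hF.continuousOn.integrableOn_compact (isCompact_closedBall (WithLp.toLp 2 c) ((n+1) * h))).mono_set
    ((cube_subset_ball c hh).trans ball_subset_closedBall)

noncomputable def chld {n : ℕ} (c : Fin n → ℝ) (h : ℝ) (e : Fin n → Bool) : Fin n → ℝ :=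
  fun i => c i + if e i then h / 2 else 0

theorem cube_split {n : ℕ} {F : EuclideanSpace ℝ (Fin n) → ℝ} (hF : Continuous F)
    (c : Fin n → ℝ) {h : ℝ} (hh : 0 < h) :
    ∫ x in Cube c h, F x = ∑ e : Fin n → Bool, ∫ x in Cube (chld c h e) (h / 2), F x := by
  have hU : Cube c h = ⋃ e : Fin n → Bool, Cube (chld c h e) (h / 2) := by
    ext x
    simp only [mem_iUnion]
    constructor
    · intro hx
      refine ⟨fun i => decide (c i + h / 2 ≤ x i), fun i => ?_⟩
      have := hx i
      simp only [chld, decide_eq_true_eq]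
      split_ifs with h1
      · constructor <;> linarith
      · push Not at h1; constructor <;> linarith
    · rintro ⟨e, he⟩ i
      have := he i
      simp only [chld] at this
      split_ifs at this <;> constructor <;> linarith
  rw [hU, integral_iUnion_fintype]
  · intro e; exact cube_meas _ _
  · intro e e' hne
    rw [Function.onFun, Set.disjoint_left]
    intro x hx hx'
    apply hne
    ext i
    have h1 := hx i
    have h2 := hx' i
    simp only [chld] at h1 h2
    cases h3 : e i <;> cases h4 : e' i <;> simp [h3, h4] at h1 h2 ⊢ <;> linarith
  · intro e; exact cont_int_cube hF _ (by linarith)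

noncomputable def cavg {n : ℕ} (f : EuclideanSpace ℝ (Fin n) → ℝ) (c : Fin n → ℝ) (h : ℝ) : ℝ :=
  (∫ x in Cube c h, f x) / h ^ n

theorem cube_const {n : ℕ} (c : Fin n → ℝ) {h : ℝ} (hh : 0 < h) (m : ℝ) :
    ∫ _x in Cube c h, m = h ^ n * m := by
  rw [setIntegral_const, cube_vol_real c hh.le, smul_eq_mul]

theorem cavg_sub {n : ℕ} {f : EuclideanSpace ℝ (Fin n) → ℝ} (hf : Continuous f) (c : Fin n → ℝ) {h : ℝ}
    (hh : 0 < h) (m : ℝ) : h ^ n * (cavg f c h - m) = ∫ x in Cube c h, (f x - m) := by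
  rw [integral_sub (cont_int_cube hf c hh) (cont_int_cube continuous_const c hh), cube_const c hh,
    cavg]
  have : h ^ n ≠ 0 := by positivity
  field_simp

theorem cavg_sub_abs {n : ℕ} {f : EuclideanSpace ℝ (Fin n) → ℝ} (hf : Continuous f) (c : Fin n → ℝ) {h : ℝ}
    (hh : 0 < h) (m : ℝ) : h ^ n * |cavg f c h - m| ≤ ∫ x in Cube c h, |f x - m| := by
  have h1 : 0 < h ^ n := by positivity
  have h2 : h ^ n * |cavg f c h - m| = |h ^ n * (cavg f c h - m)| := by
    rw [abs_mul, abs_of_pos h1]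
  rw [h2, cavg_sub hf c hh]
  exact abs_integral_le_integral_abs

theorem cube_var {n : ℕ} {f : EuclideanSpace ℝ (Fin n) → ℝ} (hf : Continuous f) (c : Fin n → ℝ) {h : ℝ}
    (hh : 0 < h) (m : ℝ) : ∫ x in Cube c h, (f x - m) ^ 2 =
      (∫ x in Cube c h, (f x - cavg f c h) ^ 2) + h ^ n * (cavg f c h - m) ^ 2 := by
  set v := cavg f c h
  have e : ∀ x, (f x - m) ^ 2 = (f x - v) ^ 2 + ((2 * (v - m)) * (f x - v) + (v - m) ^ 2) := by
    intro x; ring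
  simp_rw [e]
  rw [integral_add (cont_int_cube (by fun_prop) c hh) (cont_int_cube (by fun_prop) c hh),
    integral_add (cont_int_cube (by fun_prop) c hh) (cont_int_cube (by fun_prop) c hh),
    integral_const_mul, ← cavg_sub hf c hh v, cube_const c hh]
  simp [v]

theorem jn_rec {n : ℕ} {f : EuclideanSpace ℝ (Fin n) → ℝ} (hf : Continuous f) {K : ℝ}
    (hK : ∀ x y, |f x - f y| ≤ K * ‖x - y‖) (hK0 : 0 ≤ K) {l V : ℝ} (hl : 0 < l) (hV0 : 0 ≤ V)
    (hV : ∀ c h, 0 < h → ∫ x in Cube c h, (f x - cavg f c h) ^ 2 ≤ V * h ^ n) (N : ℕ) :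
    ∀ (c : Fin n → ℝ) (h m : ℝ), 0 < h → K * (n * (h / 2 ^ N)) ≤ l →
      ∫ x in Cube c h, |f x - m| ≤ l * h ^ n →
      ∫ x in Cube c h, (f x - m) ^ 2 ≤
        4 * l ^ 2 * h ^ n + (V + 4 ^ n * l ^ 2) / l * ∫ x in Cube c h, |f x - m| := by
  induction N with
  | zero =>
    intro c h m hh hs hm
    have hp : 0 < h ^ n := by positivity
    have hnn : 0 ≤ ∫ x in Cube c h, |f x - m| := integral_nonneg fun x => abs_nonneg _
    have key : ∀ x ∈ Cube c h, (f x - m) ^ 2 ≤ 4 * l ^ 2 := by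
      intro x hx
      have : h ^ n * (|f x - m| - l) ≤ ∫ x in Cube c h, |f x - m| := by
        rw [← cube_const c hh]
        refine setIntegral_mono_on (cont_int_cube continuous_const c hh)
          (cont_int_cube (by fun_prop) c hh) (cube_meas _ _) fun y hy => ?_
        have h1 := hK x y
        have h2 := cube_norm c hx hy
        have h3 : K * ‖x - y‖ ≤ l := by
          refine le_trans ?_ hs
          simp only [pow_zero, div_one]
          gcongr
        have := abs_sub_le (f x) (f y) m
        linarith
      have h4 : |f x - m| - l ≤ l := by
        refine le_of_mul_le_mul_left ?_ hp
        linarith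
      rw [← sq_abs]
      nlinarith [abs_nonneg (f x - m)]
    have : ∫ x in Cube c h, (f x - m) ^ 2 ≤ ∫ x in Cube c h, 4 * l ^ 2 :=
      setIntegral_mono_on (cont_int_cube (by fun_prop) c hh)
          (cont_int_cube (by fun_prop) c hh) (cube_meas _ _) key
    rw [cube_const c hh] at this
    have : 0 ≤ (V + 4 ^ n * l ^ 2) / l * ∫ x in Cube c h, |f x - m| := by positivity
    linarith
  | succ N ih =>
    intro c h m hh hs hm
    have hh2 : 0 < h / 2 := by linarith
    have hp : 0 < (h / 2) ^ n := by positivity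
    have hsum : h ^ n = ∑ e : Fin n → Bool, (h / 2) ^ n := by
      simp; rw [← mul_pow]; congr 1; ring
    rw [cube_split (F := fun x => (f x - m) ^ 2) (by fun_prop) c hh,
      cube_split (F := fun x => |f x - m|) (by fun_prop) c hh, hsum, Finset.mul_sum, Finset.mul_sum,
      ← Finset.sum_add_distrib]
    refine Finset.sum_le_sum fun e _ => ?_
    by_cases hcase : ∫ x in Cube (chld c h e) (h / 2), |f x - m| ≤ l * (h / 2) ^ n
    · refine ih _ _ _ hh2 ?_ hcase
      refine le_trans (le_of_eq ?_) hs
      rw [pow_succ]; field_simp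
    · push Not at hcase
      set I := ∫ x in Cube (chld c h e) (h / 2), |f x - m| with hI
      have hIle : I ≤ l * (2 ^ n * (h / 2) ^ n) := by
        have : (2:ℝ) ^ n * (h / 2) ^ n = h ^ n := by rw [← mul_pow]; congr 1; ring
        rw [this]
        refine le_trans ?_ hm
        rw [cube_split (F := fun x => |f x - m|) (by fun_prop) c hh]
        exact Finset.single_le_sum (f := fun e => ∫ x in Cube (chld c h e) (h / 2), |f x - m|)
          (fun e _ => integral_nonneg fun x => abs_nonneg _) (Finset.mem_univ e)
      rw [cube_var hf _ hh2]
      have h1 := hV (chld c h e) (h / 2) hh2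
      have h2 := cavg_sub_abs hf (chld c h e) hh2 m
      have h3 : |cavg f (chld c h e) (h / 2) - m| ≤ 2 ^ n * l := by
        refine le_of_mul_le_mul_left ?_ hp
        rw [← hI] at h2; linarith
      have h4 : (cavg f (chld c h e) (h / 2) - m) ^ 2 ≤ 4 ^ n * l ^ 2 := by
        have : (4:ℝ) ^ n = (2 ^ n) ^ 2 := by rw [← pow_mul, mul_comm, pow_mul]; norm_num
        rw [this, ← mul_pow, ← sq_abs]
        gcongr
      have h5 : (h / 2) ^ n ≤ I / l := by rw [le_div_iff₀ hl]; linarith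
      calc _ ≤ V * (h / 2) ^ n + (h / 2) ^ n * (4 ^ n * l ^ 2) := by gcongr
        _ = (V + 4 ^ n * l ^ 2) * (h / 2) ^ n := by ring
        _ ≤ (V + 4 ^ n * l ^ 2) * (I / l) := by gcongr
        _ = (V + 4 ^ n * l ^ 2) / l * I := by ring
        _ ≤ _ := by
          have : 0 ≤ 4 * l ^ 2 * (h / 2) ^ n := by positivity
          linarith

theorem jn_cube {n : ℕ} {f : EuclideanSpace ℝ (Fin n) → ℝ} (hf : Continuous f) {K M : ℝ}
    (hK : ∀ x y, |f x - f y| ≤ K * ‖x - y‖) (hM : ∀ x, |f x| ≤ M) {a : ℝ} (ha : 0 < a)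
    (hosc : ∀ (c : Fin n → ℝ) (h : ℝ), 0 < h → ∫ x in Cube c h, |f x - cavg f c h| ≤ a * h ^ n)
    (c : Fin n → ℝ) (h : ℝ) (hh : 0 < h) :
    ∫ x in Cube c h, (f x - cavg f c h) ^ 2 ≤ (8 + 4 ^ n) * (2 * a) ^ 2 * h ^ n := by
  have hK' : ∀ x y, |f x - f y| ≤ |K| * ‖x - y‖ := fun x y =>
    (hK x y).trans (mul_le_mul_of_nonneg_right (le_abs_self _) (norm_nonneg _))
  set l := 2 * a with hl
  have hl0 : 0 < l := by positivity
  set T := (8 + 4 ^ n) * l ^ 2 with hT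
  have hM0 : 0 ≤ M := (abs_nonneg _).trans (hM 0)
  have hk : ∀ k : ℕ, ∀ (c : Fin n → ℝ) (h : ℝ), 0 < h → ∫ x in Cube c h, (f x - cavg f c h) ^ 2 ≤
      (T + M ^ 2 * (1 / 2) ^ k) * h ^ n := by
    intro k
    induction k with
    | zero =>
      intro c h hh
      have h1 := cube_var hf c hh 0
      have h2 : ∫ x in Cube c h, (f x - 0) ^ 2 ≤ ∫ x in Cube c h, M ^ 2 :=
        setIntegral_mono_on (cont_int_cube (by fun_prop) c hh)
          (cont_int_cube (by fun_prop) c hh) (cube_meas _ _) fun x _ => by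
            rw [sub_zero, ← sq_abs]; gcongr; exact hM x
      rw [cube_const c hh] at h2
      have h3 : 0 ≤ T * h ^ n := by positivity
      have h4 : 0 ≤ h ^ n * (cavg f c h - 0) ^ 2 := by positivity
      rw [pow_zero]; linarith
    | succ k ih =>
      intro c h hh
      obtain ⟨N, hN⟩ : ∃ N : ℕ, |K| * (n * (h / 2 ^ N)) ≤ l := by
        obtain ⟨N, hN⟩ := exists_pow_lt_of_lt_one (show 0 < l / (|K| * (n * h) + 1) by positivity)
          (show (1/2:ℝ) < 1 by norm_num)
        refine ⟨N, ?_⟩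
        rw [lt_div_iff₀ (by positivity)] at hN
        have : |K| * (n * (h / 2 ^ N)) = (1/2) ^ N * (|K| * (n * h)) := by
          rw [div_pow, one_pow]; field_simp
        rw [this]
        have : (0:ℝ) < (1/2) ^ N := by positivity
        linarith
      have h1 := jn_rec hf hK' (abs_nonneg K) hl0 (by positivity) ih N c h (cavg f c h) hh hN
        ((hosc c h hh).trans (by gcongr; linarith))
      refine h1.trans ?_
      have h2 := hosc c h hh
      have h3 : (T + M ^ 2 * (1 / 2) ^ k + 4 ^ n * l ^ 2) / l * ∫ x in Cube c h, |f x - cavg f c h| ≤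
        (T + M ^ 2 * (1 / 2) ^ k + 4 ^ n * l ^ 2) / l * (a * h ^ n) := by gcongr
      refine (add_le_add le_rfl h3).trans (le_of_eq ?_)
      rw [hT, hl]; field_simp; ring
  have hlim : Tendsto (fun k : ℕ => (T + M ^ 2 * (1 / 2) ^ k) * h ^ n) atTop
      (𝓝 ((T + M ^ 2 * 0) * h ^ n)) :=
    (((tendsto_pow_atTop_nhds_zero_of_lt_one (by norm_num) (by norm_num)).const_mul _).const_add _).mul_const _
  have := ge_of_tendsto' hlim fun k => hk k c h hh
  simpa using this

theorem jn_ball (n : ℕ) : ∃ C : ℝ, 0 ≤ C ∧ ∀ (f : EuclideanSpace ℝ (Fin n) → ℝ) (K M : ℝ),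
    Continuous f → (∀ x y, |f x - f y| ≤ K * ‖x - y‖) → (∀ x, |f x| ≤ M) → ∀ a : ℝ, 0 < a →
    (∀ x r, 0 < r → ∃ m, ∫ y in ball x r, |f y - m| ≤ a * r ^ n) →
    ∀ x r m, 0 < r → ∫ y in ball x r, |f y - m| ≤ a * r ^ n →
      ∫ y in ball x r, (f y - m) ^ 2 ≤ C * a ^ 2 * r ^ n := by
  set v := volume.real (ball (0 : EuclideanSpace ℝ (Fin n)) 1) with hv
  have hv0 : 0 < v := by
    rw [hv, Measure.real]
    exact ENNReal.toReal_pos (measure_ball_pos _ _ one_pos).ne' measure_ball_lt_top.ne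
  set b : ℝ := 2 * ((n:ℝ) + 1) ^ n with hb
  have hb0 : 0 < b := by positivity
  set W : ℝ := (8 + 4 ^ n) * (2 * b) ^ 2 * 2 ^ n with hW
  set U : ℝ := (b * 2 ^ n + 1) / v with hU
  refine ⟨2 * W + 2 * (v * U ^ 2), by positivity, ?_⟩
  intro f K M hf hK hM a ha hosc x r m hr hm
  have hcube : ∀ (c : Fin n → ℝ) (h : ℝ), 0 < h → ∫ x in Cube c h, |f x - cavg f c h| ≤ (b * a) * h ^ n := by
    intro c h hh
    obtain ⟨m, hm⟩ := hosc (WithLp.toLp 2 c) ((n + 1) * h) (by positivity)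
    have h1 : ∫ x in Cube c h, |f x - m| ≤ a * ((n + 1) * h) ^ n :=
      (setIntegral_mono_set ((show Continuous fun y => |f y - m| by fun_prop).continuousOn.integrableOn_compact
        (isCompact_closedBall (WithLp.toLp 2 c) ((n+1) * h)) |>.mono_set ball_subset_closedBall)
        (Eventually.of_forall fun y => abs_nonneg _) (cube_subset_ball c hh).eventuallyLE).trans hm
    have h2 := cavg_sub_abs hf c hh m
    calc ∫ x in Cube c h, |f x - cavg f c h| ≤ ∫ x in Cube c h, (|f x - m| + |cavg f c h - m|) := by
          refine setIntegral_mono_on (cont_int_cube (by fun_prop) c hh)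
            (cont_int_cube (by fun_prop) c hh) (cube_meas _ _) fun y hy => ?_
          have := abs_sub_le (f y) m (cavg f c h)
          rwa [abs_sub_comm m] at this
      _ = (∫ x in Cube c h, |f x - m|) + h ^ n * |cavg f c h - m| := by
          rw [integral_add (cont_int_cube (by fun_prop) c hh) (cont_int_cube (by fun_prop) c hh),
            cube_const c hh]
      _ ≤ 2 * (a * ((n + 1) * h) ^ n) := by linarith
      _ = _ := by rw [hb, mul_pow]; ring
  have h2r : 0 < 2 * r := by linarith
  set c : Fin n → ℝ := fun i => x i - r with hc
  set q := cavg f c (2 * r) with hq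
  have J := jn_cube hf hK hM (mul_pos hb0 ha) hcube c (2 * r) h2r
  have O := hcube c (2 * r) h2r
  rw [← hq] at J O
  have hsub : ball x r ⊆ Cube c (2 * r) := ball_subset_cube x r
  have cb : ∀ {F : EuclideanSpace ℝ (Fin n) → ℝ}, Continuous F → IntegrableOn F (ball x r) := by
    intro F hF
    exact (cont_int_cube hF c h2r).mono_set hsub
  have J' : ∫ y in ball x r, (f y - q) ^ 2 ≤ W * a ^ 2 * r ^ n := by
    refine (setIntegral_mono_set (cont_int_cube (by fun_prop) c h2r)
      (Eventually.of_forall fun y => sq_nonneg _) hsub.eventuallyLE).trans (J.trans (le_of_eq ?_))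
    rw [hW, mul_pow 2 r]; ring
  have O' : ∫ y in ball x r, |f y - q| ≤ b * 2 ^ n * a * r ^ n := by
    refine (setIntegral_mono_set (cont_int_cube (by fun_prop) c h2r)
      (Eventually.of_forall fun y => abs_nonneg _) hsub.eventuallyLE).trans (O.trans (le_of_eq ?_))
    rw [mul_pow 2 r]; ring
  have hvol : volume.real (ball x r) = r ^ n * v := by
    have := Measure.addHaar_ball_of_pos (volume : Measure (EuclideanSpace ℝ (Fin n))) x hr
    rw [Measure.real, this, ENNReal.toReal_mul, ENNReal.toReal_ofReal (by positivity), hv, Measure.real]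
    simp
  have hrn : 0 < r ^ n := by positivity
  have D : |q - m| ≤ U * a := by
    have : r ^ n * v * |q - m| ≤ ∫ y in ball x r, (|f y - q| + |f y - m|) := by
      rw [← hvol, ← smul_eq_mul, ← setIntegral_const]
      refine setIntegral_mono_on (cb continuous_const) (cb (by fun_prop)) measurableSet_ball fun y _ => ?_
      have := abs_sub_le q (f y) m
      rwa [abs_sub_comm q (f y)] at this
    rw [integral_add (cb (by fun_prop)) (cb (by fun_prop))] at this
    have h5 : r ^ n * (v * |q - m|) ≤ r ^ n * ((b * 2 ^ n + 1) * a) := by linarith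
    have h6 := le_of_mul_le_mul_left h5 hrn
    rw [hU, div_mul_eq_mul_div, le_div_iff₀ hv0]; linarith
  calc ∫ y in ball x r, (f y - m) ^ 2 ≤ ∫ y in ball x r, (2 * (f y - q) ^ 2 + 2 * (U * a) ^ 2) := by
        refine setIntegral_mono_on (cb (by fun_prop)) (cb (by fun_prop)) measurableSet_ball fun y _ => ?_
        have : (q - m) ^ 2 ≤ (U * a) ^ 2 := by rw [← sq_abs]; gcongr
        nlinarith [sq_nonneg (f y - q - (q - m))]
    _ = 2 * (∫ y in ball x r, (f y - q) ^ 2) + r ^ n * v * (2 * (U * a) ^ 2) := by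
        rw [integral_add (cb (by fun_prop)) (cb (by fun_prop)), integral_const_mul, setIntegral_const,
          hvol, smul_eq_mul]
    _ ≤ 2 * (W * a ^ 2 * r ^ n) + r ^ n * v * (2 * (U * a) ^ 2) := by linarith
    _ = _ := by ring


noncomputable def vn (n : ℕ) : ℝ := volume.real (ball (0 : EuclideanSpace ℝ (Fin n)) 1)

theorem vn_pos (n : ℕ) : 0 < vn n := by
  rw [vn, Measure.real]
  exact ENNReal.toReal_pos (measure_ball_pos _ _ one_pos).ne' measure_ball_lt_top.ne

theorem vol_ball {n : ℕ} (x : EuclideanSpace ℝ (Fin n)) {r : ℝ} (hr : 0 < r) :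
    volume.real (ball x r) = r ^ n * vn n := by
  have := Measure.addHaar_ball_of_pos (volume : Measure (EuclideanSpace ℝ (Fin n))) x hr
  rw [Measure.real, this, ENNReal.toReal_mul, ENNReal.toReal_ofReal (by positivity), vn, Measure.real]
  simp

theorem abs_int_le {n : ℕ} {F : EuclideanSpace ℝ (Fin n) → ℝ} {M r : ℝ} (hr : 0 < r)
    (x : EuclideanSpace ℝ (Fin n)) (hM : ∀ y, |F y| ≤ M) (hs : ∀ y, r ≤ ‖x - y‖ → F y = 0) :
    |∫ y, F y| ≤ M * (r ^ n * vn n) := by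
  rw [← setIntegral_eq_integral_of_forall_compl_eq_zero (s := ball x r), ← vol_ball x hr]
  · have := norm_setIntegral_le_of_norm_le_const (μ := volume) (f := F) (C := M) (s := ball x r)
      measure_ball_lt_top (fun y _ => hM y)
    exact this
  · intro y hy
    refine hs y ?_
    rw [mem_ball, dist_eq_norm, not_lt, norm_sub_rev] at hy
    exact hy

theorem int_of_supp {α : Type*} [NormedAddCommGroup α] [ProperSpace α] [MeasurableSpace α]
    [BorelSpace α] (μ : Measure α) [IsFiniteMeasureOnCompacts μ] {F : α → ℝ} (hF : Continuous F)
    {R : ℝ} (hs : ∀ y, R ≤ ‖y‖ → F y = 0) : Integrable F μ := by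
  refine hF.integrable_of_hasCompactSupport (HasCompactSupport.intro (isCompact_closedBall 0 R) ?_)
  intro x hx
  refine hs x ?_
  rw [mem_closedBall, dist_zero_right, not_le] at hx
  exact hx.le

structure GK {n : ℕ} (k : EuclideanSpace ℝ (Fin n) → EuclideanSpace ℝ (Fin n) → ℝ) (b l R : ℝ) : Prop where
  hb : 0 ≤ b
  hl : 0 ≤ l
  hR : 1 ≤ R
  bd : ∀ x y, |k x y| ≤ b
  lip : ∀ x y x' y', |k x y - k x' y'| ≤ l * (‖x - x'‖ + ‖y - y'‖)
  sx : ∀ x y, R ≤ ‖x‖ → k x y = 0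
  sy : ∀ x y, R ≤ ‖y‖ → k x y = 0

namespace GK
variable {n : ℕ} {k : EuclideanSpace ℝ (Fin n) → EuclideanSpace ℝ (Fin n) → ℝ} {b l R : ℝ}

theorem swap (h : GK k b l R) : GK (fun x y => k y x) b l R where
  hb := h.hb
  hl := h.hl
  hR := h.hR
  bd := fun x y => h.bd y x
  lip := fun x y x' y' => by rw [add_comm]; exact h.lip _ _ _ _
  sx := fun x y hx => h.sy y x hx
  sy := fun x y hx => h.sx y x hx

theorem cont (h : GK k b l R) : Continuous (fun p : EuclideanSpace ℝ (Fin n) × EuclideanSpace ℝ (Fin n) => k p.1 p.2) := by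
  refine (LipschitzWith.of_dist_le_mul (K := (2 * l).toNNReal) ?_).continuous
  intro p q
  rw [Real.dist_eq, Real.coe_toNNReal _ (by linarith [h.hl])]
  refine (h.lip _ _ _ _).trans ?_
  have h1 : ‖p.1 - q.1‖ ≤ dist p q := by rw [← dist_eq_norm]; exact le_max_left _ _
  have h2 : ‖p.2 - q.2‖ ≤ dist p q := by rw [← dist_eq_norm]; exact le_max_right _ _
  nlinarith [h.hl]

theorem cont1 (h : GK k b l R) (x) : Continuous (fun y => k x y) :=
  h.cont.comp (by fun_prop : Continuous fun y => (x, y))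

theorem cont2 (h : GK k b l R) (y) : Continuous (fun x => k x y) :=
  h.cont.comp (by fun_prop : Continuous fun x => (x, y))

theorem integ (h : GK k b l R) (x) {f : EuclideanSpace ℝ (Fin n) → ℝ} (hf : Continuous f) :
    Integrable (fun y => k x y * f y) :=
  int_of_supp volume ((h.cont1 x).mul hf) (R := R) fun y hy => by simp [h.sy x y hy]

theorem int_bd (h : GK k b l R) (x) {f : EuclideanSpace ℝ (Fin n) → ℝ} {M : ℝ} (hf : ∀ y, |f y| ≤ M) :
    |∫ y, k x y * f y| ≤ b * M * (R ^ n * vn n) := by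
  refine abs_int_le (by linarith [h.hR]) 0 (fun y => ?_) fun y hy => ?_
  · rw [abs_mul]; exact mul_le_mul (h.bd _ _) (hf y) (abs_nonneg _) h.hb
  · rw [h.sy x y (by simpa using hy), zero_mul]

theorem int_lip (h : GK k b l R) (x x') {f : EuclideanSpace ℝ (Fin n) → ℝ} (hc : Continuous f)
    {M : ℝ} (hf : ∀ y, |f y| ≤ M) :
    |(∫ y, k x y * f y) - ∫ y, k x' y * f y| ≤ l * ‖x - x'‖ * M * (R ^ n * vn n) := by
  rw [← integral_sub (h.integ x hc) (h.integ x' hc)]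
  refine abs_int_le (by linarith [h.hR]) 0 (fun y => ?_) fun y hy => ?_
  · rw [← sub_mul, abs_mul]
    refine mul_le_mul ?_ (hf y) (abs_nonneg _) (mul_nonneg h.hl (norm_nonneg _))
    simpa using h.lip x y x' y
  · rw [h.sy x y (by simpa using hy), h.sy x' y (by simpa using hy), zero_mul, sub_zero]

theorem int_cont (h : GK k b l R) {f : EuclideanSpace ℝ (Fin n) → ℝ} (hc : Continuous f)
    {M : ℝ} (hf : ∀ y, |f y| ≤ M) : Continuous fun x => ∫ y, k x y * f y := by
  have hM0 : 0 ≤ M := (abs_nonneg _).trans (hf 0)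
  have h0 : 0 ≤ l * M * (R ^ n * vn n) := by
    have := h.hl; have := h.hR; have := vn_pos n
    positivity
  refine (LipschitzWith.of_dist_le_mul (K := (l * M * (R ^ n * vn n)).toNNReal) ?_).continuous
  intro x x'
  rw [Real.dist_eq, Real.coe_toNNReal _ h0, dist_eq_norm]
  refine (h.int_lip x x' hc hf).trans (le_of_eq ?_)
  ring

noncomputable def op (h : GK k b l R) :
    (EuclideanSpace ℝ (Fin n) →ᵇ ℝ) →L[ℝ] (EuclideanSpace ℝ (Fin n) →ᵇ ℝ) :=
  LinearMap.mkContinuous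
    { toFun := fun f => BoundedContinuousFunction.ofNormedAddCommGroup (fun x => ∫ y, k x y * f y)
        (h.int_cont f.continuous fun y => f.norm_coe_le_norm y) (b * ‖f‖ * (R ^ n * vn n))
        (fun x => h.int_bd x fun y => f.norm_coe_le_norm y)
      map_add' := by
        intro f g; ext x
        simp only [BoundedContinuousFunction.coe_ofNormedAddCommGroup,
          BoundedContinuousFunction.coe_add, Pi.add_apply, mul_add]
        exact integral_add (h.integ x f.continuous) (h.integ x g.continuous)
      map_smul' := by
        intro c f; ext x
        simp only [BoundedContinuousFunction.coe_ofNormedAddCommGroup,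
          BoundedContinuousFunction.coe_smul, smul_eq_mul, RingHom.id_apply, ← integral_const_mul]
        congr 1; ext y; ring }
    (b * (R ^ n * vn n)) (by
      intro f
      have h0 : 0 ≤ b * ‖f‖ * (R ^ n * vn n) := by
        have := h.hb; have := h.hR; have := vn_pos n
        positivity
      refine (BoundedContinuousFunction.norm_le (by linarith)).2 fun x => ?_
      refine (h.int_bd x fun y => f.norm_coe_le_norm y).trans (le_of_eq ?_)
      ring)

theorem op_apply (h : GK k b l R) (f : EuclideanSpace ℝ (Fin n) →ᵇ ℝ) (x) :
    h.op f x = ∫ y, k x y * f y := rfl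

theorem adj (h : GK k b l R) (f g : EuclideanSpace ℝ (Fin n) →ᵇ ℝ) :
    ∫ x, (∫ y, k x y * f y) * g x = ∫ y, f y * ∫ x, k x y * g x := by
  simp_rw [← integral_mul_const, ← integral_const_mul]
  rw [integral_integral_swap]
  · congr 1; ext y; congr 1; ext x; ring
  · refine int_of_supp (R := R) (volume.prod volume) ?_ ?_
    · have := h.cont
      simp only [Function.uncurry_def]
      fun_prop
    · rintro ⟨x, y⟩ hp
      rcases le_max_iff.1 hp with h1 | h1
      · simp [Function.uncurry, h.sx x y h1]
      · simp [Function.uncurry, h.sy x y h1]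

end GK

/-- A dyadic family of kernels with cancellation. -/
structure KF {n : ℕ} (K : ℕ → EuclideanSpace ℝ (Fin n) → EuclideanSpace ℝ (Fin n) → ℝ) (C R : ℝ) : Prop where
  hC : 0 ≤ C
  gk : ∀ j, GK (K j) (C * (2 ^ j) ^ n) (C * (2 ^ j) ^ (n + 1)) R
  supp : ∀ j x y, 2 * R * (1 / 2) ^ j ≤ ‖x - y‖ → K j x y = 0
  int1 : ∀ j x, |∫ y, K j x y| ≤ C * (1 / 2) ^ j
  int2 : ∀ j y, |∫ x, K j x y| ≤ C * (1 / 2) ^ j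

namespace KF
variable {n : ℕ} {K : ℕ → EuclideanSpace ℝ (Fin n) → EuclideanSpace ℝ (Fin n) → ℝ} {C R : ℝ}

theorem swap (h : KF K C R) : KF (fun j x y => K j y x) C R where
  hC := h.hC
  gk := fun j => (h.gk j).swap
  supp := fun j x y hx => h.supp j y x (by rwa [norm_sub_rev])
  int1 := h.int2
  int2 := h.int1

theorem hR (h : KF K C R) : 1 ≤ R := (h.gk 0).hR

theorem Qbound (h : KF K C R) {j k : ℕ} (hjk : j ≤ k) (x y) :
    |∫ z, K j z x * K k z y| ≤ C ^ 2 * ((2 * R) ^ (n + 1) * vn n + 1) * (2 ^ j) ^ n * (1 / 2) ^ (k - j) := by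
  have hR := h.hR
  have hC := h.hC
  have hv := vn_pos n
  have hItg : ∀ a, Integrable fun z => K j a x * K k z y := fun a =>
    Integrable.const_mul (int_of_supp volume ((h.gk k).cont2 y) (R := R) fun z hz => (h.gk k).sx z y hz) _
  have hItg2 : Integrable fun z => K j z x * K k z y :=
    int_of_supp volume (((h.gk j).cont2 x).mul ((h.gk k).cont2 y)) (R := R)
      fun z hz => by simp [(h.gk k).sx z y hz]
  have e : ∫ z, K j z x * K k z y =
      (∫ z, (K j z x - K j y x) * K k z y) + K j y x * ∫ z, K k z y := by
    rw [← integral_const_mul, ← integral_add]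
    · congr 1; ext z; ring
    · simp_rw [sub_mul]; exact hItg2.sub (hItg y)
    · exact hItg y
  obtain ⟨d, rfl⟩ := Nat.exists_eq_add_of_le hjk
  have hd : j + d - j = d := by omega
  rw [e, hd]
  have h2j : (2:ℝ) ^ j * (1 / 2) ^ j = 1 := by rw [← mul_pow]; norm_num
  have h2d : (2:ℝ) ^ (j + d) * (1 / 2) ^ (j + d) = 1 := by rw [← mul_pow]; norm_num
  have hr : 0 < 2 * R * (1 / 2 : ℝ) ^ (j + d) := by positivity
  have A : |∫ z, (K j z x - K j y x) * K (j + d) z y| ≤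
      C ^ 2 * ((2 * R) ^ (n + 1) * vn n) * (2 ^ j) ^ n * (1 / 2) ^ d := by
    refine (abs_int_le (M := (C * (2 ^ j) ^ (n + 1) * (2 * R * (1 / 2) ^ (j + d))) * (C * (2 ^ (j + d)) ^ n))
      hr y (fun z => ?_) fun z hz => ?_).trans (le_of_eq ?_)
    · by_cases hz : 2 * R * (1 / 2) ^ (j + d) ≤ ‖z - y‖
      · rw [h.supp _ _ _ hz]; simp; positivity
      · push Not at hz
        rw [abs_mul]
        refine mul_le_mul ?_ ((h.gk _).bd _ _) (abs_nonneg _) (by positivity)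
        refine ((h.gk j).lip _ _ _ _).trans ?_
        rw [sub_self, norm_zero, add_zero]
        gcongr
    · rw [h.supp (j + d) z y (by rwa [norm_sub_rev]), mul_zero]
    · have e1 : (2:ℝ) ^ (j + d) = (2 ^ j) * 2 ^ d := pow_add _ _ _
      have e2 : (1/2:ℝ) ^ (j + d) = (1/2) ^ j * (1/2) ^ d := pow_add _ _ _
      have e3 : (2:ℝ) ^ d * (1 / 2) ^ d = 1 := by rw [← mul_pow]; norm_num
      calc _ = C ^ 2 * ((2 * R) ^ (n + 1) * vn n) * (2 ^ j) ^ n * (2 ^ j * (1 / 2) ^ (j + d)) *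
            ((2 ^ (j + d)) * (1/2) ^ (j + d)) ^ n := by ring
        _ = _ := by rw [h2d, one_pow, mul_one, e2, ← mul_assoc (2 ^ j), h2j, one_mul]
  have B : |K j y x * ∫ z, K (j + d) z y| ≤ C ^ 2 * (2 ^ j) ^ n * (1 / 2) ^ d := by
    rw [abs_mul]
    calc _ ≤ (C * (2 ^ j) ^ n) * (C * (1 / 2) ^ (j + d)) :=
          mul_le_mul ((h.gk j).bd _ _) (h.int2 _ _) (abs_nonneg _) (by positivity)
      _ = C ^ 2 * (2 ^ j) ^ n * (1 / 2) ^ d * (1 / 2) ^ j := by rw [pow_add]; ring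
      _ ≤ C ^ 2 * (2 ^ j) ^ n * (1 / 2) ^ d * 1 := by
          gcongr; exact pow_le_one₀ (by norm_num) (by norm_num)
      _ = _ := by ring
  calc _ ≤ _ := abs_add_le _ _
    _ ≤ _ := add_le_add A B
    _ = _ := by ring

theorem Qbound' (h : KF K C R) (j k : ℕ) (x y) :
    |∫ z, K j z x * K k z y| ≤ C ^ 2 * ((2 * R) ^ (n + 1) * vn n + 1) * (2 ^ (min j k)) ^ n *
      (1 / 2) ^ ((j - k) + (k - j)) := by
  rcases le_total j k with hjk | hjk
  · rw [min_eq_left hjk, Nat.sub_eq_zero_of_le hjk, zero_add]; exact h.Qbound hjk x y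
  · rw [min_eq_right hjk, Nat.sub_eq_zero_of_le hjk, add_zero]
    simp_rw [mul_comm (K j _ x)]
    exact h.Qbound hjk y x

theorem Qsupp (h : KF K C R) (j k : ℕ) (x y) (hxy : 4 * R * (1 / 2) ^ (min j k) ≤ ‖x - y‖) :
    ∫ z, K j z x * K k z y = 0 := by
  have hR := h.hR
  refine integral_eq_zero_of_ae (Eventually.of_forall fun z => ?_)
  simp only [Pi.zero_apply]
  by_contra hne
  have h1 : ‖z - x‖ < 2 * R * (1 / 2) ^ j := by
    by_contra! hh; exact hne (by rw [h.supp _ _ _ hh, zero_mul])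
  have h2 : ‖z - y‖ < 2 * R * (1 / 2) ^ k := by
    by_contra! hh; exact hne (by rw [h.supp _ _ _ hh, mul_zero])
  have h3 : (1/2:ℝ) ^ j ≤ (1/2) ^ min j k := pow_le_pow_of_le_one (by norm_num) (by norm_num) (min_le_left _ _)
  have h4 : (1/2:ℝ) ^ k ≤ (1/2) ^ min j k := pow_le_pow_of_le_one (by norm_num) (by norm_num) (min_le_right _ _)
  have h5 : ‖x - y‖ ≤ ‖z - x‖ + ‖z - y‖ := by
    rw [norm_sub_rev z x]
    calc ‖x - y‖ = ‖(x - z) + (z - y)‖ := by congr 1; abel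
      _ ≤ _ := norm_add_le _ _
  nlinarith

noncomputable def CC (n : ℕ) (C R : ℝ) : ℝ :=
  C ^ 2 * ((2 * R) ^ (n + 1) * vn n + 1) * ((4 * R) ^ n * vn n)

theorem comp_bound (h : KF K C R) (j k : ℕ) (f : EuclideanSpace ℝ (Fin n) →ᵇ ℝ) (x) :
    |∫ z, K j z x * ∫ y, K k z y * f y| ≤ CC n C R * (1 / 2) ^ ((j - k) + (k - j)) * ‖f‖ := by
  have hR := h.hR
  have hC := h.hC
  have hv := vn_pos n
  have e : ∫ z, K j z x * ∫ y, K k z y * f y = ∫ y, (∫ z, K j z x * K k z y) * f y := by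
    simp_rw [← integral_mul_const, ← integral_const_mul]
    rw [integral_integral_swap]
    · congr 1; ext y; congr 1; ext x; ring
    · refine int_of_supp (R := R) (volume.prod volume) ?_ ?_
      · have h1 := (h.gk k).cont
        have h2 := (h.gk j).cont2 x
        simp only [Function.uncurry_def]
        fun_prop
      · rintro ⟨x, y⟩ hp
        rcases le_max_iff.1 hp with h1 | h1
        · simp [Function.uncurry, (h.gk k).sx x y h1]
        · simp [Function.uncurry, (h.gk k).sy x y h1]
  rw [e]
  refine (abs_int_le (M := (C ^ 2 * ((2 * R) ^ (n + 1) * vn n + 1) * (2 ^ (min j k)) ^ n *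
      (1 / 2) ^ ((j - k) + (k - j))) * ‖f‖) (r := 4 * R * (1 / 2) ^ (min j k)) (by positivity) x
      (fun y => ?_) fun y hy => ?_).trans (le_of_eq ?_)
  · rw [abs_mul]
    exact mul_le_mul (h.Qbound' j k x y) (f.norm_coe_le_norm y) (abs_nonneg _) (by positivity)
  · rw [h.Qsupp j k x y hy, zero_mul]
  · have h2 : (2:ℝ) ^ (min j k) * (1 / 2) ^ (min j k) = 1 := by rw [← mul_pow]; norm_num
    calc _ = CC n C R * (1 / 2) ^ ((j - k) + (k - j)) * ‖f‖ * (2 ^ (min j k) * (1 / 2) ^ (min j k)) ^ n := by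
          rw [CC]; ring
      _ = _ := by rw [h2, one_pow, mul_one]

end KF

theorem geo_sum (q : ℝ) (hq0 : 0 ≤ q) (hq1 : q < 1) (S : Finset ℕ) (i : ℕ) :
    ∑ j ∈ S, q ^ ((i - j) + (j - i)) ≤ 2 * (1 - q)⁻¹ := by
  have key : ∀ (A : Finset ℕ) (g : ℕ → ℕ), Set.InjOn g A → ∑ j ∈ A, q ^ (g j) ≤ (1 - q)⁻¹ := by
    intro A g hg
    rw [← Finset.sum_image (f := fun m => q ^ m) hg, ← tsum_geometric_of_lt_one hq0 hq1]
    exact (summable_geometric_of_lt_one hq0 hq1).sum_le_tsum _ fun m _ => by positivity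
  rw [← Finset.sum_filter_add_sum_filter_not S (fun j => j ≤ i), two_mul]
  refine add_le_add (key _ _ ?_) (key _ _ ?_)
  · intro a ha b hb hab
    simp at ha hb hab; omega
  · intro a ha b hb hab
    simp at ha hb hab; omega

/-- The bilinear form. -/
noncomputable def bform (n : ℕ) (R : ℝ) : (EuclideanSpace ℝ (Fin n) →ᵇ ℝ) →ₗ[ℝ] (EuclideanSpace ℝ (Fin n) →ᵇ ℝ) →ₗ[ℝ] ℝ :=
  have hi : ∀ f g : EuclideanSpace ℝ (Fin n) →ᵇ ℝ, IntegrableOn (fun x => f x * g x) (ball 0 R) := fun f g =>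
    ((f.continuous.mul g.continuous).continuousOn.integrableOn_compact
      (isCompact_closedBall 0 R)).mono_set ball_subset_closedBall
  LinearMap.mk₂ ℝ (fun f g => ∫ x in ball 0 R, f x * g x)
    (by intro f f' g; simp only [BoundedContinuousFunction.coe_add, Pi.add_apply, add_mul]
        exact integral_add (hi f g) (hi f' g))
    (by intro c f g; simp only [BoundedContinuousFunction.coe_smul, smul_eq_mul, mul_assoc]
        exact integral_const_mul _ _)
    (by intro f g g'; simp only [BoundedContinuousFunction.coe_add, Pi.add_apply, mul_add]
        exact integral_add (hi f g) (hi f g'))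
    (by intro c f g; simp only [BoundedContinuousFunction.coe_smul, smul_eq_mul, mul_left_comm _ c]
        exact integral_const_mul _ _)

theorem bform_apply {n : ℕ} {R : ℝ} (f g : EuclideanSpace ℝ (Fin n) →ᵇ ℝ) :
    bform n R f g = ∫ x in ball 0 R, f x * g x := rfl

theorem KF.l2 {n : ℕ} {K : ℕ → EuclideanSpace ℝ (Fin n) → EuclideanSpace ℝ (Fin n) → ℝ} {C R : ℝ}
    (h : KF K C R) : ∃ M : ℝ, 0 ≤ M ∧ ∀ (S : Finset ℕ) (f : EuclideanSpace ℝ (Fin n) →ᵇ ℝ),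
      ∫ x in ball 0 R, (∑ j ∈ S, ∫ y, K j x y * f y) ^ 2 ≤ M * ∫ x in ball 0 R, f x ^ 2 := by
  have hR := h.hR
  have hv := vn_pos n
  have hCC : 0 ≤ KF.CC n C R := by rw [KF.CC]; positivity
  set q : ℝ := Real.sqrt (1 / 2) with hq
  have hq0 : 0 ≤ q := Real.sqrt_nonneg _
  have hq2 : q ^ 2 = 1 / 2 := Real.sq_sqrt (by norm_num)
  have hq1 : q < 1 := by nlinarith
  set M : ℝ := Real.sqrt (KF.CC n C R) * (2 * (1 - q)⁻¹) with hM
  have hM0 : 0 ≤ M := by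
    have : 0 ≤ (1 - q)⁻¹ := inv_nonneg.2 (by linarith)
    positivity
  refine ⟨M ^ 2, by positivity, fun S f => ?_⟩
  set c : S → S → ℝ := fun i j => Real.sqrt (KF.CC n C R) * q ^ (((i:ℕ) - j) + ((j:ℕ) - i)) with hc
  have hcsq : ∀ i j, c i j ^ 2 = KF.CC n C R * (1 / 2) ^ (((i:ℕ) - j) + ((j:ℕ) - i)) := by
    intro i j
    simp only [hc]
    rw [mul_pow, Real.sq_sqrt hCC, ← pow_mul, mul_comm _ 2, pow_mul, hq2]
  have hball : ∀ {F : EuclideanSpace ℝ (Fin n) → ℝ}, (∀ x, R ≤ ‖x‖ → F x = 0) →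
      ∫ x in ball 0 R, F x = ∫ x, F x := by
    intro F hF
    refine setIntegral_eq_integral_of_forall_compl_eq_zero fun x hx => hF x ?_
    rw [mem_ball, dist_zero_right, not_lt] at hx
    exact hx
  have := cotlar (bform n R) (fun f g => by simp only [bform_apply, mul_comm])
    (fun f => by rw [bform_apply]; exact integral_nonneg fun x => mul_self_nonneg _)
    (volume.real (ball (0 : EuclideanSpace ℝ (Fin n)) R)) (by
      intro f g
      rw [bform_apply]
      refine (le_abs_self _).trans ?_
      have h1 := norm_setIntegral_le_of_norm_le_const (μ := volume) (f := fun x => f x * g x)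
        (s := ball 0 R) (C := ‖f‖ * ‖g‖) measure_ball_lt_top (fun x _ => by
          rw [norm_mul]
          exact mul_le_mul (f.norm_coe_le_norm x) (g.norm_coe_le_norm x) (norm_nonneg _) (norm_nonneg _))
      refine h1.trans (le_of_eq (by ring)))
    measureReal_nonneg
    (fun i : S => (h.gk i).op) (fun i : S => (h.gk i).swap.op) (by
      intro i f g
      simp only [bform_apply, GK.op_apply]
      rw [hball, hball, (h.gk i).adj]
      · intro x hx; simp [(h.gk i).sy _ x hx]
      · intro x hx; simp [(h.gk i).sx x _ hx])
    c (fun i j => by positivity) (by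
      intro i j
      refine ContinuousLinearMap.opNorm_le_bound _ (sq_nonneg _) fun g => ?_
      refine (BoundedContinuousFunction.norm_le (by positivity)).2 fun x => ?_
      rw [hcsq]
      exact h.comp_bound i j g x) (by
      intro i j
      refine ContinuousLinearMap.opNorm_le_bound _ (sq_nonneg _) fun g => ?_
      refine (BoundedContinuousFunction.norm_le (by positivity)).2 fun x => ?_
      rw [hcsq]
      exact h.swap.comp_bound i j g x) M (by
      intro i
      simp only [hc, hM]
      rw [← Finset.mul_sum]
      refine mul_le_mul_of_nonneg_left ?_ (Real.sqrt_nonneg _)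
      have := geo_sum q hq0 hq1 S i
      rwa [← Finset.sum_coe_sort] at this) hM0 f
  rw [bform_apply, bform_apply] at this
  simp only [sum_apply, BoundedContinuousFunction.coe_sum, Finset.sum_apply, GK.op_apply, ← sq] at this
  convert this using 3 with x
  rw [← Finset.sum_coe_sort]


abbrev EE (n : ℕ) := EuclideanSpace ℝ (Fin n)

/-- bounded Lipschitz function supported in the ball of radius R -/
structure BL {n : ℕ} (g : EE n → ℝ) (L R : ℝ) : Prop where
  hL : 0 ≤ L
  b : ∀ x, |g x| ≤ L
  l : ∀ x y, |g x - g y| ≤ L * ‖x - y‖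
  s : ∀ x, R ≤ ‖x‖ → g x = 0

theorem cont_of_lip {n : ℕ} {g : EE n → ℝ} {L : ℝ} (hl : ∀ x y, |g x - g y| ≤ L * ‖x - y‖) :
    Continuous g := by
  refine (LipschitzWith.of_dist_le_mul (K := L.toNNReal) fun x y => ?_).continuous
  rw [Real.dist_eq, dist_eq_norm]
  refine (hl x y).trans ?_
  gcongr
  exact Real.le_coe_toNNReal L

theorem BL.cont {n : ℕ} {g : EE n → ℝ} {L R : ℝ} (h : BL g L R) : Continuous g := cont_of_lip h.l

structure Dat {n : ℕ} (χ ψ : EE n → ℝ) (R L : ℝ) : Prop where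
  hR : 1 ≤ R
  hχ : BL χ L R
  hψ : BL ψ L R
  i : ∫ x, ψ x = 0

noncomputable def kk {n : ℕ} (χ ψ : EE n → ℝ) (x y : EE n) (s : ℝ) : ℝ :=
  χ x * χ y * ψ (y + s⁻¹ • (x - y)) * (s ^ (n + 1))⁻¹

noncomputable def KK {n : ℕ} (χ ψ : EE n → ℝ) (j : ℕ) (x y : EE n) : ℝ :=
  ∫ s in Ioc ((1 / 2 : ℝ) ^ (j + 1)) ((1 / 2) ^ j), kk χ ψ x y s

theorem supp_aux {n : ℕ} {ψ : EE n → ℝ} {R L : ℝ} (h : BL ψ L R) {z v : EE n} {s : ℝ} (hs : 0 < s)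
    (hz : ‖z‖ < R) (hv : 2 * R * s ≤ ‖v‖) : ψ (z + s⁻¹ • v) = 0 := by
  apply h.s
  have h1 : 2 * R ≤ ‖s⁻¹ • v‖ := by
    rw [norm_smul, norm_inv, Real.norm_of_nonneg hs.le, ← div_eq_inv_mul, le_div_iff₀ hs]
    exact hv
  have h2 := norm_sub_norm_le (s⁻¹ • v) (-z)
  rw [norm_neg, sub_neg_eq_add, add_comm (s⁻¹ • v)] at h2
  linarith

theorem fub_int {n : ℕ} {F : EE n → ℝ → ℝ} {a b R : ℝ} (ha : 0 < a)
    (hc : ContinuousOn (Function.uncurry F) (univ ×ˢ Ioi 0))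
    (hs : ∀ y s, 0 < s → R ≤ ‖y‖ → F y s = 0) :
    Integrable (Function.uncurry F) (volume.prod (volume.restrict (Ioc a b))) := by
  have h1 : IntegrableOn (Function.uncurry F) (closedBall (0 : EE n) R ×ˢ Icc a b) (volume.prod volume) := by
    refine ContinuousOn.integrableOn_compact ((isCompact_closedBall 0 R).prod isCompact_Icc) (hc.mono ?_)
    rintro ⟨y, s⟩ ⟨_, h2⟩
    exact ⟨mem_univ _, lt_of_lt_of_le ha h2.1⟩
  have h2 : IntegrableOn (Function.uncurry F) ((univ : Set (EE n)) ×ˢ Ioc a b) (volume.prod volume) := by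
    refine (h1.of_forall_sdiff_eq_zero (s := closedBall (0 : EE n) R ×ˢ Icc a b)
      (MeasurableSet.univ.prod measurableSet_Ioc) ?_)
    rintro ⟨y, s⟩ ⟨⟨_, h3⟩, h4⟩
    refine hs y s (ha.trans h3.1) ?_
    by_contra! h5
    exact h4 ⟨by simpa using h5.le, Ioc_subset_Icc_self h3⟩
  rw [IntegrableOn, ← Measure.prod_restrict, Measure.restrict_univ] at h2
  exact h2

theorem kk_cont {n : ℕ} {χ ψ : EE n → ℝ} (h1 : Continuous χ) (h2 : Continuous ψ) :
    ContinuousOn (fun p : (EE n × EE n) × ℝ => kk χ ψ p.1.1 p.1.2 p.2) (univ ×ˢ Ioi 0) := by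
  have hi : ContinuousOn (fun p : (EE n × EE n) × ℝ => p.2⁻¹) (univ ×ˢ Ioi 0) :=
    continuousOn_snd.inv₀ fun p hp => (ne_of_gt hp.2)
  have hj : ContinuousOn (fun p : (EE n × EE n) × ℝ => (p.2 ^ (n + 1))⁻¹) (univ ×ˢ Ioi 0) :=
    (continuousOn_snd.pow _).inv₀ fun p hp => (pow_ne_zero _ (ne_of_gt hp.2))
  unfold kk
  refine ContinuousOn.mul (ContinuousOn.mul (by fun_prop) ?_) hj
  refine h2.comp_continuousOn' ?_
  exact ContinuousOn.add (by fun_prop) (hi.smul (by fun_prop))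

theorem kk_conty {n : ℕ} {χ ψ f : EE n → ℝ} (h1 : Continuous χ) (h2 : Continuous ψ) (h3 : Continuous f) (x : EE n) :
    ContinuousOn (Function.uncurry fun (y : EE n) (s : ℝ) => kk χ ψ x y s * f y) (univ ×ˢ Ioi 0) := by
  refine ContinuousOn.mul ?_ (by fun_prop)
  refine (kk_cont h1 h2).comp (f := fun p : EE n × ℝ => ((x, p.1), p.2)) (by fun_prop) ?_
  intro p hp
  exact ⟨mem_univ _, hp.2⟩

theorem kk_contx {n : ℕ} {χ ψ : EE n → ℝ} (h1 : Continuous χ) (h2 : Continuous ψ) (y : EE n) :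
    ContinuousOn (Function.uncurry fun (x : EE n) (s : ℝ) => kk χ ψ x y s) (univ ×ˢ Ioi 0) := by
  refine (kk_cont h1 h2).comp (f := fun p : EE n × ℝ => ((p.1, y), p.2)) (by fun_prop) ?_
  intro p hp
  exact ⟨mem_univ _, hp.2⟩

/-- scaling -/
theorem int_scale {n : ℕ} (ψ : EE n → ℝ) (x : EE n) {s : ℝ} (hs : 0 < s) :
    ∫ w, ψ (x + s⁻¹ • w) = s ^ n * ∫ w, ψ w := by
  have := Measure.integral_comp_inv_smul volume (fun w : EE n => ψ (x + w)) s
  rw [this, finrank_euclideanSpace_fin, abs_of_pos (by positivity), smul_eq_mul,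
    integral_add_left_eq_self (fun w => ψ w)]

namespace Dat
variable {n : ℕ} {χ ψ : EE n → ℝ} {R L : ℝ}

theorem kk_supp (h : Dat χ ψ R L) {x y : EE n} {s : ℝ} (hs : 0 < s) (hxy : 2 * R * s ≤ ‖x - y‖) :
    kk χ ψ x y s = 0 := by
  unfold kk
  rcases le_or_gt R ‖y‖ with hy | hy
  · rw [h.hχ.s y hy]; simp
  · rw [supp_aux h.hψ hs hy hxy]; simp

theorem kk_bd (h : Dat χ ψ R L) {x y : EE n} {s : ℝ} (hs : 0 < s) :
    |kk χ ψ x y s| ≤ L ^ 3 * (s ^ (n + 1))⁻¹ := by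
  unfold kk
  have := h.hχ.hL
  rw [abs_mul, abs_mul, abs_mul, abs_of_pos (a := (s ^ (n + 1))⁻¹) (by positivity)]
  gcongr
  calc _ ≤ L * L * L := by
        gcongr
        · exact h.hχ.b x
        · exact h.hχ.b y
        · exact h.hψ.b _
    _ = _ := by ring

theorem kk_lip (h : Dat χ ψ R L) {x y x' y' : EE n} {s : ℝ} (hs : 0 < s) (hs1 : s ≤ 1) :
    |kk χ ψ x y s - kk χ ψ x' y' s| ≤ 3 * L ^ 3 * s⁻¹ * (s ^ (n + 1))⁻¹ * (‖x - x'‖ + ‖y - y'‖) := by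
  unfold kk
  have hL := h.hχ.hL
  rw [← sub_mul, abs_mul, abs_of_pos (a := (s ^ (n + 1))⁻¹) (by positivity)]
  have hi : 1 ≤ s⁻¹ := (one_le_inv₀ hs).2 hs1
  have hψ : |ψ (y + s⁻¹ • (x - y)) - ψ (y' + s⁻¹ • (x' - y'))| ≤ L * (s⁻¹ * (‖x - x'‖ + ‖y - y'‖)) := by
    refine (h.hψ.l _ _).trans ?_
    gcongr
    have e : y + s⁻¹ • (x - y) - (y' + s⁻¹ • (x' - y')) = s⁻¹ • (x - x') + (1 - s⁻¹) • (y - y') := by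
      module
    rw [e]
    refine (norm_add_le _ _).trans ?_
    rw [norm_smul, norm_smul, mul_add, norm_inv, Real.norm_of_nonneg hs.le]
    gcongr
    rw [Real.norm_eq_abs, abs_sub_comm, abs_of_nonneg (by linarith)]
    linarith
  have a1 := h.hχ.l x x'
  have a2 := h.hχ.l y y'
  set A := ψ (y + s⁻¹ • (x - y))
  set A' := ψ (y' + s⁻¹ • (x' - y'))
  have e : χ x * χ y * A - χ x' * χ y' * A' = (χ x - χ x') * χ y * A + χ x' * (χ y - χ y') * A + χ x' * χ y' * (A - A') := by ring
  set d := ‖x - x'‖ + ‖y - y'‖ with hd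
  have hd1 : ‖x - x'‖ ≤ s⁻¹ * d := by
    have := norm_nonneg (x - x'); have := norm_nonneg (y - y'); nlinarith
  have hd2 : ‖y - y'‖ ≤ s⁻¹ * d := by
    have := norm_nonneg (x - x'); have := norm_nonneg (y - y'); nlinarith
  have key : |χ x * χ y * A - χ x' * χ y' * A'| ≤ 3 * L ^ 3 * (s⁻¹ * d) := by
    rw [e]
    calc _ ≤ |(χ x - χ x') * χ y * A| + |χ x' * (χ y - χ y') * A| + |χ x' * χ y' * (A - A')| := abs_add_three _ _ _
      _ ≤ (L * (s⁻¹ * d)) * L * L + L * (L * (s⁻¹ * d)) * L + L * L * (L * (s⁻¹ * d)) := by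
          simp only [abs_mul]
          have b1 := h.hχ.b y
          have b2 := h.hχ.b x'
          have b3 := h.hχ.b y'
          have b4 : |A| ≤ L := h.hψ.b _
          have c1 : |χ x - χ x'| ≤ L * (s⁻¹ * d) := a1.trans (by gcongr)
          have c2 : |χ y - χ y'| ≤ L * (s⁻¹ * d) := a2.trans (by gcongr)
          gcongr
      _ = _ := by ring
  calc _ ≤ 3 * L ^ 3 * (s⁻¹ * d) * (s ^ (n + 1))⁻¹ := by gcongr
    _ = _ := by ring

/-- D trick -/
theorem D_bd (h : Dat χ ψ R L) {g : EE n → ℝ} {M : ℝ} (hg : BL g M R) {x : EE n} (hx : ‖x‖ < R) {s : ℝ} (hs : 0 < s) (y : EE n) :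
    |g y * ψ (y + s⁻¹ • (x - y)) - g x * ψ (x + s⁻¹ • (x - y))| ≤ 2 * M * L * (2 * R * s) ∧
    (2 * R * s ≤ ‖x - y‖ → g y * ψ (y + s⁻¹ • (x - y)) - g x * ψ (x + s⁻¹ • (x - y)) = 0) := by
  have hL := h.hχ.hL
  have hM := hg.hL
  have hR := h.hR
  have h0 : 2 * R * s ≤ ‖x - y‖ → g y * ψ (y + s⁻¹ • (x - y)) - g x * ψ (x + s⁻¹ • (x - y)) = 0 := by
    intro hxy
    rw [supp_aux h.hψ hs hx hxy]
    rcases le_or_gt R ‖y‖ with hy | hy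
    · rw [hg.s y hy]; simp
    · rw [supp_aux h.hψ hs hy hxy]; simp
  refine ⟨?_, h0⟩
  rcases le_or_gt (2 * R * s) ‖x - y‖ with hxy | hxy
  · rw [h0 hxy, abs_zero]; positivity
  · have e : g y * ψ (y + s⁻¹ • (x - y)) - g x * ψ (x + s⁻¹ • (x - y)) =
      (g y - g x) * ψ (y + s⁻¹ • (x - y)) + g x * (ψ (y + s⁻¹ • (x - y)) - ψ (x + s⁻¹ • (x - y))) := by ring
    rw [e]
    have c1 : |g y - g x| ≤ M * (2 * R * s) := by
      refine (hg.l _ _).trans ?_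
      rw [norm_sub_rev]; gcongr
    have c2 : |ψ (y + s⁻¹ • (x - y)) - ψ (x + s⁻¹ • (x - y))| ≤ L * (2 * R * s) := by
      refine (h.hψ.l _ _).trans ?_
      rw [add_sub_add_right_eq_sub, norm_sub_rev]; gcongr
    have c3 := hg.b x
    have c4 := h.hψ.b (y + s⁻¹ • (x - y))
    calc _ ≤ _ := abs_add_le _ _
      _ ≤ M * (2 * R * s) * L + M * (L * (2 * R * s)) := by
          rw [abs_mul, abs_mul]; gcongr
      _ = _ := by ring

theorem int_ψ (h : Dat χ ψ R L) (x : EE n) {s : ℝ} (hs : 0 < s) :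
    ∫ y, ψ (x + s⁻¹ • (x - y)) = 0 := by
  have := integral_sub_left_eq_self (fun w : EE n => ψ (x + s⁻¹ • w)) volume x
  rw [this, int_scale ψ x hs, h.i, mul_zero]

theorem ψ_integ (h : Dat χ ψ R L) (z : EE n) {s : ℝ} (hs : 0 < s) :
    Integrable fun w : EE n => ψ (z + s⁻¹ • w) := by
  have h0 : Integrable ψ := int_of_supp volume h.hψ.cont (R := R) h.hψ.s
  have h1 : Integrable fun w => ψ (z + w) := h0.comp_add_left z
  exact h1.comp_smul (inv_ne_zero hs.ne')

theorem ψ_integ' (h : Dat χ ψ R L) (x : EE n) {s : ℝ} (hs : 0 < s) :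
    Integrable fun y : EE n => ψ (x + s⁻¹ • (x - y)) :=
  (h.ψ_integ x hs).comp_sub_left x

theorem Phi_bd (h : Dat χ ψ R L) {g : EE n → ℝ} {M : ℝ} (hg : BL g M R) (x : EE n) {s : ℝ} (hs : 0 < s) :
    |∫ y, χ x * g y * ψ (y + s⁻¹ • (x - y)) * (s ^ (n + 1))⁻¹| ≤ 2 * M * L ^ 2 * (2 * R) ^ (n + 1) * vn n := by
  have hL := h.hχ.hL
  have hM := hg.hL
  have hR := h.hR
  have hv := vn_pos n
  rcases le_or_gt R ‖x‖ with hx | hx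
  · simp [h.hχ.s x hx]; positivity
  have i1 : Integrable fun y => g y * ψ (y + s⁻¹ • (x - y)) := by
    have c1 := hg.cont
    have c2 := h.hψ.cont
    exact int_of_supp volume (by fun_prop) (R := R) fun y hy => by rw [hg.s y hy, zero_mul]
  have e : ∫ y, χ x * g y * ψ (y + s⁻¹ • (x - y)) * (s ^ (n + 1))⁻¹ =
      χ x * (s ^ (n + 1))⁻¹ * ∫ y, (g y * ψ (y + s⁻¹ • (x - y)) - g x * ψ (x + s⁻¹ • (x - y))) := by
    rw [integral_sub i1 ((h.ψ_integ' x hs).const_mul _), integral_const_mul, h.int_ψ x hs, mul_zero, sub_zero,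
      ← integral_const_mul]
    congr 1; ext y; ring
  rw [e, abs_mul, abs_mul, abs_of_pos (a := (s ^ (n + 1))⁻¹) (by positivity)]
  have key := abs_int_le (F := fun y => (g y * ψ (y + s⁻¹ • (x - y)) - g x * ψ (x + s⁻¹ • (x - y))))
    (r := 2 * R * s) (by positivity) x (fun y => (h.D_bd hg hx hs y).1) (fun y => (h.D_bd hg hx hs y).2)
  calc _ ≤ L * (s ^ (n + 1))⁻¹ * (2 * M * L * (2 * R * s) * ((2 * R * s) ^ n * vn n)) := by
        gcongr; exact h.hχ.b x
    _ = 2 * M * L ^ 2 * (2 * R) ^ (n + 1) * vn n * (s ^ (n + 1) * (s ^ (n + 1))⁻¹) := by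
        rw [mul_pow, mul_pow, mul_pow, pow_succ s]; ring
    _ = _ := by rw [mul_inv_cancel₀ (by positivity), mul_one]

theorem Phi2_bd (h : Dat χ ψ R L) (y : EE n) {s : ℝ} (hs : 0 < s) :
    |∫ x, kk χ ψ x y s| ≤ L ^ 3 * (2 * R) ^ (n + 1) * vn n := by
  have hL := h.hχ.hL
  have hR := h.hR
  have hv := vn_pos n
  unfold kk
  rcases le_or_gt R ‖y‖ with hy | hy
  · simp [h.hχ.s y hy]; positivity
  have i0 : Integrable fun x => ψ (y + s⁻¹ • (x - y)) := (h.ψ_integ y hs).comp_sub_right y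
  have i00 : ∫ x, ψ (y + s⁻¹ • (x - y)) = 0 := by
    have := integral_sub_right_eq_self (μ := volume) (fun w : EE n => ψ (y + s⁻¹ • w)) y
    rw [this, int_scale ψ y hs, h.i, mul_zero]
  have i1 : Integrable fun x => χ x * ψ (y + s⁻¹ • (x - y)) := by
    have c1 := h.hχ.cont
    have c2 := h.hψ.cont
    exact int_of_supp volume (by fun_prop) (R := R) fun y hy => by rw [h.hχ.s y hy, zero_mul]
  have e : ∫ x, χ x * χ y * ψ (y + s⁻¹ • (x - y)) * (s ^ (n + 1))⁻¹ =
      χ y * (s ^ (n + 1))⁻¹ * ∫ x, (χ x * ψ (y + s⁻¹ • (x - y)) - χ y * ψ (y + s⁻¹ • (x - y))) := by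
    rw [integral_sub i1 (i0.const_mul _), integral_const_mul, i00, mul_zero, sub_zero,
      ← integral_const_mul]
    congr 1; ext y; ring
  rw [e, abs_mul, abs_mul, abs_of_pos (a := (s ^ (n + 1))⁻¹) (by positivity)]
  have key := abs_int_le (F := fun x => (χ x * ψ (y + s⁻¹ • (x - y)) - χ y * ψ (y + s⁻¹ • (x - y))))
    (r := 2 * R * s) (M := L ^ 2 * (2 * R * s)) (by positivity) y (fun x => by
      rcases le_or_gt (2 * R * s) ‖x - y‖ with hxy | hxy
      · rw [supp_aux h.hψ hs hy hxy]; simp; positivity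
      · rw [← sub_mul, abs_mul]
        calc _ ≤ L * (2 * R * s) * L := by
              gcongr
              · refine (h.hχ.l _ _).trans ?_
                gcongr
              · exact h.hψ.b _
          _ = _ := by ring) (fun x hxy => by
      rw [norm_sub_rev] at hxy
      rw [supp_aux h.hψ hs hy hxy]; simp)
  calc _ ≤ L * (s ^ (n + 1))⁻¹ * (L ^ 2 * (2 * R * s) * ((2 * R * s) ^ n * vn n)) := by
        gcongr; exact h.hχ.b y
    _ = L ^ 3 * (2 * R) ^ (n + 1) * vn n * (s ^ (n + 1) * (s ^ (n + 1))⁻¹) := by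
        rw [mul_pow, mul_pow, mul_pow, pow_succ s]; ring
    _ = _ := by rw [mul_inv_cancel₀ (by positivity), mul_one]

theorem kk_integ (h : Dat χ ψ R L) {a b : ℝ} (ha : 0 < a) (x y : EE n) :
    IntegrableOn (kk χ ψ x y) (Ioc a b) := by
  refine (ContinuousOn.integrableOn_compact (K := Icc a b) isCompact_Icc ?_).mono_set Ioc_subset_Icc_self
  refine (kk_cont h.hχ.cont h.hψ.cont).comp (f := fun s : ℝ => ((x, y), s)) (by fun_prop) ?_
  intro s hs
  exact ⟨mem_univ _, lt_of_lt_of_le ha hs.1⟩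

/-- integral over dyadic interval -/
theorem dy_bd {G : ℝ → ℝ} {j : ℕ} {M : ℝ} (hG : ∀ s, 0 < s → s ≤ 1 → (1 / 2) ^ (j + 1) ≤ s → |G s| ≤ M) :
    |∫ s in Ioc ((1 / 2 : ℝ) ^ (j + 1)) ((1 / 2) ^ j), G s| ≤ M * (1 / 2) ^ (j + 1) := by
  have := norm_setIntegral_le_of_norm_le_const (μ := volume) (f := G) (C := M)
    (s := Ioc ((1 / 2 : ℝ) ^ (j + 1)) ((1 / 2) ^ j)) measure_Ioc_lt_top (fun s hs => by
      refine hG s (lt_trans (by positivity) hs.1) (hs.2.trans (pow_le_one₀ (by norm_num) (by norm_num))) hs.1.le)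
  refine (this.trans (le_of_eq ?_))
  rw [Real.volume_real_Ioc_of_le (pow_le_pow_of_le_one (by norm_num) (by norm_num) (by omega : j ≤ j + 1))]
  ring

theorem inv_bd {j m : ℕ} {s : ℝ} (h : (1 / 2 : ℝ) ^ (j + 1) ≤ s) : (s ^ m)⁻¹ ≤ (2 ^ (j + 1)) ^ m := by
  have h0 : (0:ℝ) < (1/2) ^ (j + 1) := by positivity
  have : s⁻¹ ≤ 2 ^ (j + 1) := by
    have h1 := inv_anti₀ h0 h
    rwa [one_div, inv_pow, inv_inv] at h1
  rw [← inv_pow]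
  have h2 : 0 ≤ s⁻¹ := inv_nonneg.2 (h0.le.trans h)
  gcongr

theorem kf (h : Dat χ ψ R L) : ∃ C, KF (KK χ ψ) C R := by
  have hL := h.hχ.hL
  have hR := h.hR
  have hv := vn_pos n
  have hpp : ∀ j : ℕ, (2:ℝ) ^ (j + 1) * (1 / 2) ^ (j + 1) = 1 := fun j => by rw [← mul_pow]; norm_num
  set C1 := 3 * L ^ 3 * 2 ^ (n + 1) with hC1
  set C2 := 2 * L * L ^ 2 * (2 * R) ^ (n + 1) * vn n with hC2
  have hC10 : 0 ≤ C1 := by positivity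
  have hC20 : 0 ≤ C2 := by positivity
  refine ⟨C1 + C2, by positivity, fun j => ⟨by positivity, by positivity, hR, ?_, ?_, ?_, ?_⟩, ?_, ?_, ?_⟩
  · intro x y
    refine (dy_bd (M := L ^ 3 * (2 ^ (j + 1)) ^ (n + 1)) fun s hs hs1 hsj => ?_).trans ?_
    · refine (h.kk_bd hs).trans ?_
      gcongr
      exact inv_bd hsj
    · calc _ = L ^ 3 * (2 ^ (j + 1)) ^ n * (2 ^ (j + 1) * (1 / 2) ^ (j + 1)) := by rw [pow_succ]; ring
        _ = L ^ 3 * 2 ^ n * (2 ^ j) ^ n := by rw [hpp, pow_succ 2 j, mul_pow]; ring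
        _ ≤ _ := by
          gcongr
          have : L ^ 3 * 2 ^ n ≤ C1 := by
            rw [hC1, pow_succ 2 n]
            have : 0 ≤ L ^ 3 * 2 ^ n := by positivity
            linarith
          linarith
  · intro x y x' y'
    unfold KK
    rw [← integral_sub (h.kk_integ (by positivity) _ _) (h.kk_integ (by positivity) _ _)]
    refine (dy_bd (M := 3 * L ^ 3 * (2 ^ (j + 1)) * (2 ^ (j + 1)) ^ (n + 1) * (‖x - x'‖ + ‖y - y'‖)) fun s hs hs1 hsj => ?_).trans ?_
    · refine (h.kk_lip hs hs1).trans ?_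
      have := inv_bd (m := n + 1) hsj
      have := inv_bd (m := 1) hsj
      simp only [pow_one] at this
      gcongr
    · calc _ = 3 * L ^ 3 * (2 ^ (j + 1)) ^ (n + 1) * (‖x - x'‖ + ‖y - y'‖) * (2 ^ (j + 1) * (1 / 2) ^ (j + 1)) := by ring
        _ = C1 * (2 ^ j) ^ (n + 1) * (‖x - x'‖ + ‖y - y'‖) := by rw [hpp, pow_succ 2 j, mul_pow]; ring
        _ ≤ _ := by
          gcongr
          linarith
  · intro x y hx
    simp [KK, kk, h.hχ.s x hx]
  · intro x y hx
    simp [KK, kk, h.hχ.s y hx]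
  · intro j x y hxy
    refine setIntegral_eq_zero_of_forall_eq_zero fun s hs => h.kk_supp (lt_trans (by positivity) hs.1) ?_
    refine le_trans ?_ hxy
    have := hs.2
    gcongr
  · intro j x
    unfold KK
    have hcc := kk_conty h.hχ.cont h.hψ.cont (continuous_const (y := (1:ℝ))) x
    simp only [mul_one] at hcc
    rw [integral_integral_swap (fub_int (R := R) (by positivity) hcc
      (fun y s _ hy => by simp [kk, h.hχ.s y hy]))]
    refine (dy_bd (M := C2) fun s hs hs1 hsj => ?_).trans ?_
    · exact h.Phi_bd h.hχ x hs
    · have : (0:ℝ) < (1/2)^j := by positivity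
      rw [pow_succ]; nlinarith
  · intro j y
    unfold KK
    rw [integral_integral_swap (fub_int (R := R) (by positivity) (kk_contx h.hχ.cont h.hψ.cont y)
      (fun x s _ hy => by simp [kk, h.hχ.s x hy]))]
    refine (dy_bd (M := C2) fun s hs hs1 hsj => ?_).trans ?_
    · refine (h.Phi2_bd y hs).trans ?_
      have : 0 ≤ L ^ 3 * (2 * R) ^ (n + 1) * vn n := by positivity
      rw [hC2]; linarith
    · have : (0:ℝ) < (1/2)^j := by positivity
      rw [pow_succ]; nlinarith

end Dat


theorem BL.mul {n : ℕ} {χ f : EE n → ℝ} {L R M K : ℝ} (h : BL χ L R) (hM : ∀ x, |f x| ≤ M) (hK0 : 0 ≤ K)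
    (hK : ∀ x y, |f x - f y| ≤ K * ‖x - y‖) : BL (fun x => χ x * f x) (L * (M + K)) R := by
  have hL := h.hL
  have hM0 : 0 ≤ M := (abs_nonneg _).trans (hM 0)
  refine ⟨by positivity, fun x => ?_, fun x y => ?_, fun x hx => by simp [h.s x hx]⟩
  · rw [abs_mul]
    have := mul_le_mul (h.b x) (hM x) (abs_nonneg _) hL
    nlinarith
  · have e : χ x * f x - χ y * f y = (χ x - χ y) * f x + χ y * (f x - f y) := by ring
    rw [e]
    calc _ ≤ _ := abs_add_le _ _
      _ ≤ (L * ‖x - y‖) * M + L * (K * ‖x - y‖) := by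
        rw [abs_mul, abs_mul]
        have a1 := h.l x y
        have a2 := hM x
        have a3 := h.b y
        have a4 := hK x y
        gcongr
      _ = _ := by ring

noncomputable def Tp {n : ℕ} (χ ψ f : EE n → ℝ) (x : EE n) : ℝ :=
  ∫ s in Ioc (0:ℝ) 1, ∫ y, kk χ ψ x y s * f y

theorem subst_lem (G : ℝ → ℝ) {ε : ℝ} (hε : 0 < ε) :
    ∫ s in Ioc (0:ℝ) 1, s⁻¹ * G (ε / s) = ∫ ρ in Ioi ε, ρ⁻¹ * G ρ := by
  have h1 := integral_comp_rpow_Ioi ((Iio (1:ℝ)).indicator fun s => s⁻¹ * G (ε / s)) (p := -1) (by norm_num)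
  rw [setIntegral_indicator measurableSet_Iio, Ioi_inter_Iio] at h1
  rw [integral_Ioc_eq_integral_Ioo, ← h1]
  have h2 : ∀ x ∈ Ioi (0:ℝ), (|(-1:ℝ)| * x ^ ((-1:ℝ) - 1)) • (Iio (1:ℝ)).indicator (fun s => s⁻¹ * G (ε / s)) (x ^ (-1:ℝ)) =
      (Ioi (1:ℝ)).indicator (fun x => ε * ((ε * x)⁻¹ * G (ε * x))) x := by
    intro x hx
    have hx : 0 < x := hx
    have e1 : x ^ (-1:ℝ) = x⁻¹ := Real.rpow_neg_one x
    have e2 : x ^ ((-1:ℝ) - 1) = x⁻¹ * x⁻¹ := by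
      rw [Real.rpow_sub hx, e1, Real.rpow_one]; rfl
    rw [e1, e2]
    by_cases hx1 : 1 < x
    · rw [indicator_of_mem (show x⁻¹ ∈ Iio (1:ℝ) from inv_lt_one_of_one_lt₀ hx1), indicator_of_mem (show x ∈ Ioi (1:ℝ) from hx1)]
      rw [div_inv_eq_mul, inv_inv, smul_eq_mul]
      simp only [abs_neg, abs_one]
      field_simp
    · rw [indicator_of_notMem, indicator_of_notMem, smul_zero]
      · exact hx1
      · simp only [mem_Iio, not_lt] at *
        exact (one_le_inv₀ hx).2 hx1
  rw [setIntegral_congr_fun measurableSet_Ioi h2, setIntegral_indicator measurableSet_Ioi, Ioi_inter_Ioi,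
    max_eq_right zero_le_one, integral_const_mul, integral_comp_mul_left_Ioi (fun ρ => ρ⁻¹ * G ρ) 1 hε, mul_one,
    smul_eq_mul, ← mul_assoc, mul_inv_cancel₀ hε.ne', one_mul]

noncomputable def Psi {n : ℕ} (ψ : EE n → ℝ) (x : EE n) (ρ : ℝ) : ℝ := ∫ w in {w : EE n | ρ < ‖w‖}, ψ (x + w)

noncomputable def bet {n : ℕ} (ψ : EE n → ℝ) (R : ℝ) (x : EE n) : ℝ := ∫ ρ in Ioc 0 (2 * R), ρ⁻¹ * Psi ψ x ρ

theorem meas_ann {n : ℕ} (x : EE n) (ρ : ℝ) : MeasurableSet {w : EE n | ρ < ‖x - w‖} :=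
  (isOpen_lt (by fun_prop) (by fun_prop)).measurableSet

theorem meas_ann0 {n : ℕ} (ρ : ℝ) : MeasurableSet {w : EE n | ρ < ‖w‖} :=
  (isOpen_lt (by fun_prop) (by fun_prop)).measurableSet

theorem vol_cball {n : ℕ} (x : EE n) {r : ℝ} (hr : 0 < r) :
    volume.real (closedBall x r) = r ^ n * vn n := by
  have := Measure.addHaar_closedBall (volume : Measure (EE n)) x hr.le
  rw [Measure.real, this, ENNReal.toReal_mul, ENNReal.toReal_ofReal (by positivity), vn, Measure.real]
  simp

namespace Dat
variable {n : ℕ} {χ ψ : EE n → ℝ} {R L : ℝ}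

theorem ψi (h : Dat χ ψ R L) (x : EE n) : Integrable fun w => ψ (x + w) :=
  (int_of_supp volume h.hψ.cont (R := R) h.hψ.s).comp_add_left x

theorem Psi_eq (h : Dat χ ψ R L) (x : EE n) (ρ : ℝ) : Psi ψ x ρ = - ∫ w in closedBall 0 ρ, ψ (x + w) := by
  have h1 := integral_add_compl (s := closedBall 0 ρ) measurableSet_closedBall (h.ψi x)
  rw [integral_add_left_eq_self (μ := volume) (fun w => ψ w) x, h.i] at h1
  have e : (closedBall (0 : EE n) ρ)ᶜ = {w : EE n | ρ < ‖w‖} := by ext w; simp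
  rw [e] at h1
  rw [Psi]; linarith

theorem Psi_bd (h : Dat χ ψ R L) (x : EE n) {ρ : ℝ} (hρ : 0 < ρ) : |Psi ψ x ρ| ≤ L * (ρ ^ n * vn n) := by
  rw [h.Psi_eq, abs_neg, ← vol_cball 0 hρ]
  have := norm_setIntegral_le_of_norm_le_const (μ := volume) (f := fun w => ψ (x + w)) (C := L) (s := closedBall 0 ρ)
      measure_closedBall_lt_top (fun y _ => h.hψ.b _)
  exact this

theorem Psi_lip (h : Dat χ ψ R L) (x x' : EE n) {ρ : ℝ} (hρ : 0 < ρ) :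
    |Psi ψ x ρ - Psi ψ x' ρ| ≤ L * ‖x - x'‖ * (ρ ^ n * vn n) := by
  rw [h.Psi_eq, h.Psi_eq, neg_sub_neg, abs_sub_comm, ← vol_cball 0 hρ,
    ← integral_sub (h.ψi x).integrableOn (h.ψi x').integrableOn]
  have := norm_setIntegral_le_of_norm_le_const (μ := volume) (f := fun w => ψ (x + w) - ψ (x' + w)) (C := L * ‖x - x'‖)
    (s := closedBall 0 ρ) measure_closedBall_lt_top (fun y _ => by
      refine (h.hψ.l _ _).trans ?_
      rw [add_sub_add_right_eq_sub])
  exact this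

theorem Psi_zero (h : Dat χ ψ R L) {x : EE n} {ρ : ℝ} (hx : ‖x‖ < R) (hρ : 2 * R ≤ ρ) : Psi ψ x ρ = 0 := by
  refine setIntegral_eq_zero_of_forall_eq_zero fun w hw => ?_
  have := supp_aux h.hψ (s := 1) (v := w) one_pos hx (by
    have : ρ < ‖w‖ := hw
    linarith)
  simpa using this

theorem Psi_meas (h : Dat χ ψ R L) (x : EE n) : Measurable (Psi ψ x) := by
  have hm : MeasurableSet {p : ℝ × EE n | p.1 < ‖p.2‖} := (isOpen_lt (by fun_prop) (by fun_prop)).measurableSet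
  have hc : StronglyMeasurable fun p : ℝ × EE n => ψ (x + p.2) := by
    have := h.hψ.cont
    exact (by fun_prop : Continuous fun p : ℝ × EE n => ψ (x + p.2)).stronglyMeasurable
  have := ((hc.indicator hm).integral_prod_right' (ν := (volume : Measure (EE n)))).measurable
  convert this using 1
  ext ρ
  rw [Psi, ← integral_indicator (meas_ann0 ρ)]
  rfl

theorem g_bd {m : ℕ} {ρ R A P v : ℝ} (hA : 0 ≤ A) (hv : 0 < v) (hρ : 0 < ρ) (hρR : ρ ≤ 2 * R)
    (hP : |P| ≤ A * (ρ ^ (m + 1) * v)) : |ρ⁻¹ * P| ≤ A * ((2 * R) ^ m * v) := by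
  rw [abs_mul, abs_of_pos (inv_pos.2 hρ)]
  calc _ ≤ ρ⁻¹ * (A * (ρ ^ (m + 1) * v)) := by gcongr
    _ = A * (ρ ^ m * v) := by rw [pow_succ]; field_simp
    _ ≤ _ := by gcongr

theorem bet_integ {m : ℕ} {χ ψ : EE (m + 1) → ℝ} (h : Dat χ ψ R L) (x : EE (m + 1)) :
    IntegrableOn (fun ρ => ρ⁻¹ * Psi ψ x ρ) (Ioc 0 (2 * R)) := by
  refine Measure.integrableOn_of_bounded (M := L * ((2 * R) ^ m * vn (m + 1))) measure_Ioc_lt_top.ne ?_ ?_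
  · exact (measurable_inv.mul (h.Psi_meas x)).aestronglyMeasurable
  · refine (ae_restrict_iff' measurableSet_Ioc).2 (Eventually.of_forall fun ρ hρ => ?_)
    exact g_bd h.hψ.hL (vn_pos _) hρ.1 hρ.2 (h.Psi_bd x hρ.1)

theorem bet_bd {m : ℕ} {χ ψ : EE (m + 1) → ℝ} (h : Dat χ ψ R L) (x : EE (m + 1)) :
    |bet ψ R x| ≤ L * ((2 * R) ^ m * vn (m + 1)) * (2 * R) := by
  have hR := h.hR
  have := norm_setIntegral_le_of_norm_le_const (μ := volume) (f := fun ρ => ρ⁻¹ * Psi ψ x ρ)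
    (C := L * ((2 * R) ^ m * vn (m + 1))) (s := Ioc 0 (2 * R)) measure_Ioc_lt_top
    (fun ρ hρ => g_bd h.hψ.hL (vn_pos _) hρ.1 hρ.2 (h.Psi_bd x hρ.1))
  rw [Real.volume_real_Ioc_of_le (by linarith), sub_zero] at this
  exact this

theorem bet_lip {m : ℕ} {χ ψ : EE (m + 1) → ℝ} (h : Dat χ ψ R L) (x x' : EE (m + 1)) :
    |bet ψ R x - bet ψ R x'| ≤ L * ((2 * R) ^ m * vn (m + 1)) * (2 * R) * ‖x - x'‖ := by
  have hR := h.hR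
  rw [bet, bet, ← integral_sub (h.bet_integ x) (h.bet_integ x')]
  have := norm_setIntegral_le_of_norm_le_const (μ := volume) (f := fun ρ => ρ⁻¹ * Psi ψ x ρ - ρ⁻¹ * Psi ψ x' ρ)
    (C := L * ‖x - x'‖ * ((2 * R) ^ m * vn (m + 1))) (s := Ioc 0 (2 * R)) measure_Ioc_lt_top
    (fun ρ hρ => by
      rw [← mul_sub]
      exact g_bd (mul_nonneg h.hψ.hL (norm_nonneg _)) (vn_pos _) hρ.1 hρ.2 (h.Psi_lip x x' hρ.1))
  rw [Real.volume_real_Ioc_of_le (by linarith), sub_zero] at this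
  refine this.trans (le_of_eq (by ring))

theorem b_BL {m : ℕ} {χ ψ : EE (m + 1) → ℝ} (h : Dat χ ψ R L) :
    ∃ C, BL (fun x => χ x * (χ x * bet ψ R x)) C R := by
  have hR := h.hR
  have hL := h.hψ.hL
  have := vn_pos (m + 1)
  have h1 := h.hχ.mul h.bet_bd (by positivity) h.bet_lip
  exact ⟨_, h.hχ.mul h1.b h1.hL h1.l⟩

theorem bet_lim {m : ℕ} {χ ψ : EE (m + 1) → ℝ} (h : Dat χ ψ R L) {x : EE (m + 1)} (hx : ‖x‖ < R) :
    Tendsto (fun ε : ℝ => ∫ s in Ioc (0:ℝ) 1, s⁻¹ * Psi ψ x (ε / s)) (𝓝[>] 0) (𝓝 (bet ψ R x)) := by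
  have hR := h.hR
  have hL := h.hψ.hL
  have hv := vn_pos (m + 1)
  set C := L * ((2 * R) ^ m * vn (m + 1))
  have key : ∀ᶠ ε in 𝓝[>] (0:ℝ), |(∫ s in Ioc (0:ℝ) 1, s⁻¹ * Psi ψ x (ε / s)) - bet ψ R x| ≤ C * ε := by
    have : ∀ᶠ ε in 𝓝[>] (0:ℝ), ε < 2 * R := (eventually_lt_nhds (by linarith)).filter_mono nhdsWithin_le_nhds
    filter_upwards [this, self_mem_nhdsWithin] with ε h1 h0
    have h0 : 0 < ε := h0
    rw [subst_lem _ h0]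
    have e : ∫ ρ in Ioi ε, ρ⁻¹ * Psi ψ x ρ = ∫ ρ in Ioc ε (2 * R), ρ⁻¹ * Psi ψ x ρ := by
      refine (setIntegral_eq_of_subset_of_forall_sdiff_eq_zero measurableSet_Ioi Ioc_subset_Ioi_self ?_)
      intro ρ hρ
      rw [h.Psi_zero hx, mul_zero]
      by_contra! hh
      exact hρ.2 ⟨hρ.1, hh.le⟩
    have e2 : bet ψ R x = (∫ ρ in Ioc 0 ε, ρ⁻¹ * Psi ψ x ρ) + ∫ ρ in Ioc ε (2 * R), ρ⁻¹ * Psi ψ x ρ := by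
      rw [bet, ← setIntegral_union, Ioc_union_Ioc_eq_Ioc h0.le h1.le]
      · exact Ioc_disjoint_Ioc_of_le le_rfl
      · exact measurableSet_Ioc
      · exact (h.bet_integ x).mono_set (Ioc_subset_Ioc_right h1.le)
      · exact (h.bet_integ x).mono_set (Ioc_subset_Ioc_left h0.le)
    rw [e, e2, sub_add_cancel_right, abs_neg]
    have := norm_setIntegral_le_of_norm_le_const (μ := volume) (f := fun ρ => ρ⁻¹ * Psi ψ x ρ)
      (C := C) (s := Ioc 0 ε) measure_Ioc_lt_top
      (fun ρ hρ => g_bd h.hψ.hL (vn_pos _) hρ.1 (hρ.2.trans h1.le) (h.Psi_bd x hρ.1))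
    rw [Real.volume_real_Ioc_of_le h0.le, sub_zero] at this
    exact this
  rw [tendsto_iff_norm_sub_tendsto_zero]
  refine squeeze_zero' (Eventually.of_forall fun _ => norm_nonneg _) key ?_
  have : Tendsto (fun ε : ℝ => C * ε) (𝓝 0) (𝓝 (C * 0)) := (continuous_const.mul continuous_id).tendsto 0
  rw [mul_zero] at this
  exact this.mono_left nhdsWithin_le_nhds

end Dat


namespace Dat
variable {n : ℕ} {χ ψ : EE n → ℝ} {R L : ℝ}

theorem Phi_cont (h : Dat χ ψ R L) {f : EE n → ℝ} (hf : Continuous f) (x : EE n) :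
    ContinuousOn (fun s => ∫ y, kk χ ψ x y s * f y) (Ioi 0) := by
  refine continuousOn_integral_of_compact_support (f := fun s y => kk χ ψ x y s * f y) (k := closedBall 0 R)
    (isCompact_closedBall _ _) ?_ ?_
  · refine (kk_conty h.hχ.cont h.hψ.cont hf x).comp (f := fun p : ℝ × EE n => (p.2, p.1)) (by fun_prop) ?_
    intro p hp
    exact ⟨mem_univ _, hp.1⟩
  · intro s y _ hy
    have : R ≤ ‖y‖ := by simp at hy; exact hy.le
    simp [kk, h.hχ.s y this]

theorem Phi_bd' (h : Dat χ ψ R L) {f : EE n → ℝ} {M K : ℝ} (hM : ∀ x, |f x| ≤ M) (hK0 : 0 ≤ K)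
    (hK : ∀ x y, |f x - f y| ≤ K * ‖x - y‖) : ∃ C, 0 ≤ C ∧ ∀ x s, 0 < s → |∫ y, kk χ ψ x y s * f y| ≤ C := by
  have hg := h.hχ.mul hM hK0 hK
  have h0 := h.hχ.hL
  have h1 := hg.hL
  have hR := h.hR
  have hv := vn_pos n
  refine ⟨2 * (L * (M + K)) * L ^ 2 * (2 * R) ^ (n + 1) * vn n, by positivity, fun x s hs => ?_⟩
  convert h.Phi_bd hg x hs using 3
  ext y
  rw [kk]; ring

theorem swapj (h : Dat χ ψ R L) {f : EE n → ℝ} (hf : Continuous f) (x : EE n) (j : ℕ) :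
    ∫ y, KK χ ψ j x y * f y = ∫ s in Ioc ((1 / 2 : ℝ) ^ (j + 1)) ((1 / 2) ^ j), ∫ y, kk χ ψ x y s * f y := by
  rw [← integral_integral_swap (fub_int (R := R) (by positivity) (kk_conty h.hχ.cont h.hψ.cont hf x)
      (fun y s _ hy => by simp [kk, h.hχ.s y hy]))]
  simp_rw [integral_mul_const]
  rfl

theorem approx (h : Dat χ ψ R L) {f : EE n → ℝ} {M K : ℝ} (hM : ∀ x, |f x| ≤ M) (hK0 : 0 ≤ K)
    (hK : ∀ x y, |f x - f y| ≤ K * ‖x - y‖) : ∃ C, 0 ≤ C ∧ ∀ x N,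
      |Tp χ ψ f x - ∑ j ∈ Finset.range N, ∫ y, KK χ ψ j x y * f y| ≤ C * (1 / 2) ^ N := by
  have hf := cont_of_lip hK
  obtain ⟨C, hC, hb⟩ := h.Phi_bd' hM hK0 hK
  refine ⟨C, hC, fun x N => ?_⟩
  have hpc := h.Phi_cont hf x
  set Φ := fun s => ∫ y, kk χ ψ x y s * f y with hΦ
  have hItg : IntegrableOn Φ (Ioc 0 1) := by
    refine Integrable.of_bound ((hpc.mono Ioc_subset_Ioi_self).aestronglyMeasurable measurableSet_Ioc) C ?_
    · exact (ae_restrict_iff' measurableSet_Ioc).2 (Eventually.of_forall fun s hs => hb x s hs.1)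
  have hsum : ∑ j ∈ Finset.range N, ∫ y, KK χ ψ j x y * f y = ∫ s in Ioc ((1 / 2:ℝ) ^ N) 1, Φ s := by
    induction N with
    | zero => simp
    | succ N ih =>
      rw [Finset.sum_range_succ, ih, h.swapj hf, add_comm, ← setIntegral_union, Ioc_union_Ioc_eq_Ioc]
      · exact pow_le_pow_of_le_one (by norm_num) (by norm_num) (by omega)
      · exact pow_le_one₀ (by norm_num) (by norm_num)
      · exact Ioc_disjoint_Ioc_of_le le_rfl
      · exact measurableSet_Ioc
      · refine hItg.mono_set (Ioc_subset_Ioc (by positivity) (pow_le_one₀ (by norm_num) (by norm_num)))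
      · exact hItg.mono_set (Ioc_subset_Ioc_left (by positivity))
  have hN : (1/2:ℝ) ^ N ≤ 1 := pow_le_one₀ (by norm_num) (by norm_num)
  have hN0 : (0:ℝ) ≤ (1/2:ℝ) ^ N := by positivity
  have e : Tp χ ψ f x = (∫ s in Ioc 0 ((1 / 2:ℝ) ^ N), Φ s) + ∫ s in Ioc ((1 / 2:ℝ) ^ N) 1, Φ s := by
    rw [Tp, ← setIntegral_union, Ioc_union_Ioc_eq_Ioc hN0 hN]
    · exact Ioc_disjoint_Ioc_of_le le_rfl
    · exact measurableSet_Ioc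
    · exact hItg.mono_set (Ioc_subset_Ioc_right hN)
    · exact hItg.mono_set (Ioc_subset_Ioc_left hN0)
  rw [hsum, e, add_sub_cancel_right]
  have := norm_setIntegral_le_of_norm_le_const (μ := volume) (f := Φ)
      (C := C) (s := Ioc 0 ((1 / 2:ℝ) ^ N)) measure_Ioc_lt_top (fun s hs => hb x s hs.1)
  rw [Real.volume_real_Ioc_of_le hN0, sub_zero] at this
  exact this

noncomputable def DD (ψ g : EE n → ℝ) (x : EE n) (s : ℝ) (y : EE n) : ℝ :=
  g y * ψ (y + s⁻¹ • (x - y)) - g x * ψ (x + s⁻¹ • (x - y))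

theorem DD_cont (h : Dat χ ψ R L) {g : EE n → ℝ} (hg : Continuous g) (x : EE n) :
    ContinuousOn (fun p : ℝ × EE n => DD ψ g x p.1 p.2) (Ioi 0 ×ˢ univ) := by
  have hi : ContinuousOn (fun p : ℝ × EE n => p.1⁻¹) (Ioi 0 ×ˢ univ) :=
    continuousOn_fst.inv₀ fun p hp => (ne_of_gt hp.1)
  have h2 := h.hψ.cont
  unfold DD
  refine ContinuousOn.sub (ContinuousOn.mul (by fun_prop) ?_) (ContinuousOn.mul (by fun_prop) ?_)
  · exact h2.comp_continuousOn' (ContinuousOn.add (by fun_prop) (hi.smul (by fun_prop)))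
  · exact h2.comp_continuousOn' (ContinuousOn.add (by fun_prop) (hi.smul (by fun_prop)))

theorem DD_integ (h : Dat χ ψ R L) {g : EE n → ℝ} {M : ℝ} (hg : BL g M R) (x : EE n) {s : ℝ} (hs : 0 < s) :
    Integrable (DD ψ g x s) := by
  have i1 : Integrable fun y => g y * ψ (y + s⁻¹ • (x - y)) := by
    have c1 := hg.cont
    have c2 := h.hψ.cont
    exact int_of_supp volume (by fun_prop) (R := R) fun y hy => by rw [hg.s y hy, zero_mul]
  exact i1.sub ((h.ψ_integ' x hs).const_mul _)

theorem ann_scale (ψ : EE n → ℝ) (x : EE n) {s ε : ℝ} (hs : 0 < s) :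
    ∫ y in {y | ε < ‖x - y‖}, ψ (x + s⁻¹ • (x - y)) = s ^ n * Psi ψ x (ε / s) := by
  rw [Psi, ← integral_indicator (meas_ann x ε), ← integral_indicator (meas_ann0 _)]
  have h1 := int_scale ({w : EE n | ε / s < ‖w‖}.indicator fun w => ψ (x + w)) 0 hs
  have h2 := integral_sub_left_eq_self (fun w : EE n => ({w : EE n | ε / s < ‖w‖}.indicator fun w => ψ (x + w)) (0 + s⁻¹ • w)) volume x
  rw [← h1, ← h2]
  congr 1
  ext y
  simp only [indicator, mem_ofPred_eq, zero_add]
  have : ε / s < ‖s⁻¹ • (x - y)‖ ↔ ε < ‖x - y‖ := by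
    rw [norm_smul, norm_inv, Real.norm_of_nonneg hs.le, ← div_eq_inv_mul, div_lt_div_iff_of_pos_right hs]
  simp only [this]

theorem Phi_ann (h : Dat χ ψ R L) {f : EE n → ℝ} {M : ℝ} (hg : BL (fun x => χ x * f x) M R) (x : EE n) {s : ℝ} (hs : 0 < s) (ε : ℝ) :
    ∫ y in {y | ε < ‖x - y‖}, kk χ ψ x y s * f y =
      χ x * (s ^ (n + 1))⁻¹ * (∫ y in {y | ε < ‖x - y‖}, DD ψ (fun x => χ x * f x) x s y) +
        χ x * (χ x * f x) * (s⁻¹ * Psi ψ x (ε / s)) := by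
  have e1 : s⁻¹ = (s ^ (n + 1))⁻¹ * s ^ n := by rw [pow_succ]; field_simp
  rw [e1, mul_assoc _ (s ^ n), ← ann_scale ψ x hs]
  have e2 : ∀ A B c d : ℝ, χ x * c * A + χ x * d * (c * B) = χ x * c * (A + d * B) := by intros; ring
  rw [e2, ← integral_const_mul, ← integral_add (h.DD_integ hg x hs).integrableOn
    ((h.ψ_integ' x hs).const_mul _).integrableOn, ← integral_const_mul]
  congr 1; ext y
  rw [DD, kk]; ring

theorem Phi_full (h : Dat χ ψ R L) {f : EE n → ℝ} {M : ℝ} (hg : BL (fun x => χ x * f x) M R) (x : EE n) {s : ℝ} (hs : 0 < s) :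
    ∫ y, kk χ ψ x y s * f y =
      χ x * (s ^ (n + 1))⁻¹ * (∫ y, DD ψ (fun x => χ x * f x) x s y) := by
  have e2 : ∫ y, DD ψ (fun x => χ x * f x) x s y = ∫ y, (χ y * f y) * ψ (y + s⁻¹ • (x - y)) := by
    have e3 := integral_add (h.DD_integ hg x hs) ((h.ψ_integ' x hs).const_mul (χ x * f x))
    rw [integral_const_mul, h.int_ψ x hs, mul_zero, add_zero] at e3
    rw [← e3]
    congr 1; ext y; rw [DD]; ring
  rw [e2, ← integral_const_mul]
  congr 1; ext y
  rw [kk]; ring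

theorem H_ann (h : Dat χ ψ R L) {f : EE n → ℝ} (hf : Continuous f) (x : EE n) {ε : ℝ} (hε : 0 < ε)
    (H : EE n → EE n → ℝ)
    (hH : ∀ x y, x ≠ y → H x y =
      ∫ s in Set.Ioo (0:ℝ) 1, χ x * χ y * ψ (y + s⁻¹ • (x - y)) * (s ^ (n + 1))⁻¹) :
    ∫ y in {y | ε < ‖x - y‖}, H x y * f y = ∫ s in Ioc (0:ℝ) 1, ∫ y in {y | ε < ‖x - y‖}, kk χ ψ x y s * f y := by
  have hR := h.hR
  set a := ε / (2 * R) with ha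
  have ha0 : 0 < a := by positivity
  have hz : ∀ y ∈ {y | ε < ‖x - y‖}, ∀ s, 0 < s → s ≤ a → kk χ ψ x y s = 0 := by
    intro y hy s hs hsa
    refine h.kk_supp hs ?_
    rw [ha, le_div_iff₀ (by positivity)] at hsa
    have : ε < ‖x - y‖ := hy
    linarith
  have h1 : ∀ y ∈ {y | ε < ‖x - y‖}, H x y * f y = ∫ s in Ioc a 1, kk χ ψ x y s * f y := by
    intro y hy
    have hy' : ε < ‖x - y‖ := hy
    rw [hH x y (by rintro rfl; simp at hy'; linarith), integral_mul_const]
    congr 1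
    rw [← integral_Ioc_eq_integral_Ioo]
    refine setIntegral_eq_of_subset_of_forall_sdiff_eq_zero measurableSet_Ioc (Ioc_subset_Ioc_left ha0.le) ?_
    intro s hs
    refine hz y hy s hs.1.1 ?_
    by_contra! hh
    exact hs.2 ⟨hh, hs.1.2⟩
  rw [setIntegral_congr_fun (meas_ann x ε) h1, integral_integral_swap]
  · symm
    refine setIntegral_eq_of_subset_of_forall_sdiff_eq_zero measurableSet_Ioc (Ioc_subset_Ioc_left ha0.le) ?_
    intro s hs
    refine setIntegral_eq_zero_of_forall_eq_zero fun y hy => ?_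
    rw [hz y hy s hs.1.1, zero_mul]
    by_contra! hh
    exact hs.2 ⟨hh, hs.1.2⟩
  · have := (fub_int (b := 1) (R := R) ha0 (kk_conty h.hχ.cont h.hψ.cont hf x)
      (fun y s _ hy => by simp [kk, h.hχ.s y hy])).integrableOn (s := {y | ε < ‖x - y‖} ×ˢ univ)
    rw [IntegrableOn, ← Measure.prod_restrict, Measure.restrict_univ] at this
    exact this

theorem pv {m : ℕ} {χ ψ : EE (m + 1) → ℝ} (h : Dat χ ψ R L)
    (H : EE (m + 1) → EE (m + 1) → ℝ)
    (hH : ∀ x y, x ≠ y → H x y =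
      ∫ s in Set.Ioo (0:ℝ) 1, χ x * χ y * ψ (y + s⁻¹ • (x - y)) * (s ^ (m + 1 + 1))⁻¹)
    {f : EE (m + 1) → ℝ} {M K : ℝ} (hM : ∀ x, |f x| ≤ M) (hK0 : 0 ≤ K)
    (hK : ∀ x y, |f x - f y| ≤ K * ‖x - y‖) (x : EE (m + 1)) :
    Tendsto (fun ε : ℝ => ∫ y in {y | ε < ‖x - y‖}, H x y * f y) (𝓝[>] (0:ℝ))
      (𝓝 (Tp χ ψ f x + χ x * (χ x * bet ψ R x) * f x)) := by
  have hR := h.hR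
  have hL := h.hχ.hL
  have hv := vn_pos (m + 1)
  have hf := cont_of_lip hK
  have hg := h.hχ.mul hM hK0 hK
  have hM'0 := hg.hL
  set M' := L * (M + K)
  have E1 : ∀ᶠ ε in 𝓝[>] (0:ℝ), (∫ s in Ioc (0:ℝ) 1, ∫ y in {y | ε < ‖x - y‖}, kk χ ψ x y s * f y) =
      ∫ y in {y | ε < ‖x - y‖}, H x y * f y := by
    filter_upwards [self_mem_nhdsWithin] with ε hε
    exact (h.H_ann hf x hε H hH).symm
  refine Tendsto.congr' E1 ?_
  rcases le_or_gt R ‖x‖ with hx | hx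
  · simp [Tp, kk, h.hχ.s x hx]
  set C := L * (2 * M' * L * (2 * R) * ((2 * R) ^ (m + 1) * vn (m + 1))) with hC
  have hAbd : ∀ ε s, 0 < s → |χ x * (s ^ (m + 1 + 1))⁻¹ * (∫ y in {y | ε < ‖x - y‖}, DD ψ (fun x => χ x * f x) x s y)| ≤ C := by
    intro ε s hs
    rw [abs_mul, abs_mul, abs_of_pos (a := (s ^ (m + 1 + 1))⁻¹) (by positivity), ← integral_indicator (meas_ann x ε)]
    have key := abs_int_le (F := {y | ε < ‖x - y‖}.indicator fun y => DD ψ (fun x => χ x * f x) x s y)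
      (r := 2 * R * s) (M := 2 * M' * L * (2 * R * s)) (by positivity) x (fun y => by
        by_cases hy : y ∈ {y | ε < ‖x - y‖}
        · rw [indicator_of_mem hy]; exact (h.D_bd hg hx hs y).1
        · rw [indicator_of_notMem hy, abs_zero]; positivity) (fun y hxy => by
        by_cases hy : y ∈ {y | ε < ‖x - y‖}
        · rw [indicator_of_mem hy]; exact (h.D_bd hg hx hs y).2 hxy
        · rw [indicator_of_notMem hy])
    calc _ ≤ L * (s ^ (m + 1 + 1))⁻¹ * (2 * M' * L * (2 * R * s) * ((2 * R * s) ^ (m + 1) * vn (m + 1))) := by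
          gcongr; exact h.hχ.b x
      _ = C * (s ^ (m + 1 + 1) * (s ^ (m + 1 + 1))⁻¹) := by
          rw [mul_pow, mul_pow, pow_succ s (m + 1), hC]; ring
      _ = _ := by rw [mul_inv_cancel₀ (by positivity), mul_one]
  have hAm : ∀ ε, AEStronglyMeasurable (fun s => χ x * (s ^ (m + 1 + 1))⁻¹ *
      (∫ y in {y | ε < ‖x - y‖}, DD ψ (fun x => χ x * f x) x s y)) (volume.restrict (Ioc 0 1)) := by
    intro ε
    refine AEStronglyMeasurable.mul ?_ ?_
    · exact (by fun_prop : Measurable fun s : ℝ => χ x * (s ^ (m + 1 + 1))⁻¹).aestronglyMeasurable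
    · have h1 : AEStronglyMeasurable (fun p : ℝ × EE (m + 1) => DD ψ (fun x => χ x * f x) x p.1 p.2)
          ((volume.restrict (Ioc 0 1)).prod (volume.restrict {y | ε < ‖x - y‖})) := by
        rw [Measure.prod_restrict]
        refine ((h.DD_cont hg.cont x).mono ?_).aestronglyMeasurable (measurableSet_Ioc.prod (meas_ann x ε))
        exact prod_mono Ioc_subset_Ioi_self (subset_univ _)
      exact h1.integral_prod_right'
  have hA1 : Tendsto (fun ε => ∫ s in Ioc (0:ℝ) 1, χ x * (s ^ (m + 1 + 1))⁻¹ *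
      (∫ y in {y | ε < ‖x - y‖}, DD ψ (fun x => χ x * f x) x s y)) (𝓝[>] 0) (𝓝 (Tp χ ψ f x)) := by
    rw [Tp]
    refine tendsto_integral_filter_of_dominated_convergence (fun _ => C) (Eventually.of_forall hAm) ?_ ?_ ?_
    · refine Eventually.of_forall fun ε => (ae_restrict_iff' measurableSet_Ioc).2 (Eventually.of_forall fun s hs => ?_)
      exact hAbd ε s hs.1
    · exact integrable_const _
    · refine (ae_restrict_iff' measurableSet_Ioc).2 (Eventually.of_forall fun s hs => ?_)
      rw [h.Phi_full hg x hs.1]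
      refine Tendsto.const_mul _ ?_
      simp_rw [fun ε => (integral_indicator (meas_ann x ε) (f := fun y => DD ψ (fun x => χ x * f x) x s y) (μ := volume)).symm]
      have hi := h.DD_integ hg x hs.1
      refine tendsto_integral_filter_of_dominated_convergence (fun y => ‖DD ψ (fun x => χ x * f x) x s y‖) ?_ ?_ hi.norm ?_
      · exact Eventually.of_forall fun ε => hi.1.indicator (meas_ann x ε)
      · exact Eventually.of_forall fun ε => Eventually.of_forall fun y => norm_indicator_le_norm_self _ _
      · refine Eventually.of_forall fun y => ?_
        by_cases hxy : x = y
        · subst hxy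
          have : DD ψ (fun x => χ x * f x) x s x = 0 := by simp [DD]
          simp only [indicator, this, ite_self]
          exact tendsto_const_nhds
        · have h0 : 0 < ‖x - y‖ := norm_pos_iff.2 (sub_ne_zero.2 hxy)
          refine tendsto_const_nhds.congr' ?_
          have : ∀ᶠ ε in 𝓝[>] (0:ℝ), ε < ‖x - y‖ := (eventually_lt_nhds h0).filter_mono nhdsWithin_le_nhds
          filter_upwards [this] with ε hε
          rw [indicator_of_mem (show y ∈ {y | ε < ‖x - y‖} from hε)]
  have hB := (h.bet_lim hx).const_mul (χ x * (χ x * f x))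
  have e : Tp χ ψ f x + χ x * (χ x * bet ψ R x) * f x = Tp χ ψ f x + (χ x * (χ x * f x)) * bet ψ R x := by ring
  rw [e]
  refine (hA1.add hB).congr' ?_
  filter_upwards [self_mem_nhdsWithin] with ε hε
  have hε : 0 < ε := hε
  rw [← integral_const_mul, ← integral_add]
  · refine setIntegral_congr_fun measurableSet_Ioc fun s hs => ?_
    exact (h.Phi_ann hg x hs.1 ε).symm
  · refine Integrable.of_bound (hAm ε) C ?_
    exact (ae_restrict_iff' measurableSet_Ioc).2 (Eventually.of_forall fun s hs => hAbd ε s hs.1)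
  · refine Integrable.const_mul ?_ _
    refine Measure.integrableOn_of_bounded (M := (2 * R / ε) * (L * ((2 * R) ^ (m + 1) * vn (m + 1)))) measure_Ioc_lt_top.ne ?_ ?_
    · exact (measurable_inv.mul ((h.Psi_meas x).comp (by fun_prop))).aestronglyMeasurable
    · refine (ae_restrict_iff' measurableSet_Ioc).2 (Eventually.of_forall fun s hs => ?_)
      have hs0 := hs.1
      rcases le_or_gt (2 * R) (ε / s) with h1 | h1
      · rw [h.Psi_zero hx h1, mul_zero, norm_zero]; positivity
      · rw [norm_mul, norm_inv, Real.norm_of_nonneg hs0.le]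
        have h2 := h.Psi_bd x (ρ := ε / s) (by positivity)
        have h3 : s⁻¹ ≤ 2 * R / ε := by
          rw [le_div_iff₀ hε, ← div_eq_inv_mul]; exact h1.le
        have h4 : ‖Psi ψ x (ε / s)‖ ≤ L * ((2 * R) ^ (m + 1) * vn (m + 1)) := h2.trans (by gcongr)
        gcongr
end Dat


theorem intOn_ball {n : ℕ} {F : EE n → ℝ} (hF : Continuous F) (x : EE n) (r : ℝ) : IntegrableOn F (ball x r) :=
  (hF.continuousOn.integrableOn_compact (isCompact_closedBall x r)).mono_set ball_subset_closedBall

theorem int_const_ball {n : ℕ} (c : ℝ) (x : EE n) {r : ℝ} (hr : 0 < r) : ∫ _ in ball x r, c = c * (r ^ n * vn n) := by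
  rw [setIntegral_const, vol_ball x hr, smul_eq_mul, mul_comm]

theorem int_ball_mono {n : ℕ} {F : EE n → ℝ} (hF : Continuous F) (h0 : ∀ x, 0 ≤ F x) {s : Set (EE n)} {x : EE n} {r : ℝ}
    (hs : s ⊆ ball x r) : ∫ y in s, F y ≤ ∫ y in ball x r, F y :=
  setIntegral_mono_set (intOn_ball hF x r) (Eventually.of_forall h0) (LE.le.eventuallyLE hs)

theorem sum_two_pow (J : ℕ) : ∑ j ∈ Finset.range (J + 1), (2:ℝ) ^ j ≤ 2 * 2 ^ J := by
  induction J with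
  | zero => norm_num
  | succ J ih => rw [Finset.sum_range_succ, pow_succ]; linarith

theorem sum_j_half (N : ℕ) : ∑ j ∈ Finset.range N, (j:ℝ) * (1 / 2) ^ j ≤ 2 := by
  have : ∑ j ∈ Finset.range N, (j:ℝ) * (1 / 2) ^ j = 2 - (2 * N + 2) * (1 / 2) ^ N := by
    induction N with
    | zero => norm_num
    | succ J ih => rw [Finset.sum_range_succ, pow_succ, ih]; push_cast; ring
  rw [this]
  have : (0:ℝ) ≤ (2 * N + 2) * (1 / 2) ^ N := by positivity
  linarith

theorem sum_Ico_half (J N : ℕ) : ∑ j ∈ Finset.Ico (J + 1) N, (1 / 2 : ℝ) ^ j ≤ (1 / 2) ^ J := by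
  rw [Finset.sum_Ico_eq_sum_range]
  simp_rw [pow_add (1/2:ℝ) (J + 1)]
  rw [← Finset.mul_sum, pow_succ]
  have := sum_geometric_two_le (N - (J + 1))
  have h0 : (0:ℝ) < (1/2)^J := by positivity
  nlinarith

theorem j_half (J : ℕ) : (J:ℝ) * (1 / 2) ^ J ≤ 1 := by
  have : (J:ℝ) ≤ 2 ^ J := by exact_mod_cast Nat.lt_two_pow_self.le
  have h2 : (2:ℝ) ^ J * (1 / 2) ^ J = 1 := by rw [← mul_pow]; norm_num
  calc (J:ℝ) * (1 / 2) ^ J ≤ 2 ^ J * (1 / 2) ^ J := by gcongr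
    _ = 1 := h2

theorem chain {n : ℕ} {f : EE n → ℝ} (hf : Continuous f) {x0 : EE n} {P a : ℝ} (hP : 0 < P) {m : ℕ → ℝ} (hm0 : m 0 = 0)
    (hm : ∀ j, ∫ y in ball x0 (P * (1 / 2) ^ j), |f y - m j| ≤ a * (P * (1 / 2) ^ j) ^ n) (j : ℕ) :
    |m j| ≤ j * (a * ((1 + 2 ^ n) / vn n)) := by
  have hv := vn_pos n
  induction j with
  | zero => simp [hm0]
  | succ j ih =>
    set r := P * (1 / 2) ^ (j + 1) with hr
    have hr0 : 0 < r := by positivity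
    have hr2 : P * (1 / 2) ^ j = 2 * r := by rw [hr, pow_succ]; ring
    have h1 := hm j
    have h2 := hm (j + 1)
    rw [← hr] at h2
    rw [hr2] at h1
    have c1 : Continuous fun y => |f y - m j| := by fun_prop
    have c2 : Continuous fun y => |f y - m (j + 1)| := by fun_prop
    have h3 : ∫ y in ball x0 r, |f y - m j| ≤ ∫ y in ball x0 (2 * r), |f y - m j| :=
      int_ball_mono c1 (fun y => abs_nonneg _) (ball_subset_ball (by linarith))
    have h4 : ∫ y in ball x0 r, |m (j + 1) - m j| ≤ ∫ y in ball x0 r, (|f y - m j| + |f y - m (j + 1)|) := by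
      refine setIntegral_mono (intOn_ball continuous_const _ _) (intOn_ball (c1.add c2) _ _) fun y => ?_
      have e : m (j + 1) - m j = (f y - m j) - (f y - m (j + 1)) := by ring
      simp only
      rw [e]; exact abs_sub _ _
    rw [int_const_ball _ _ hr0, integral_add (intOn_ball c1 _ _) (intOn_ball c2 _ _)] at h4
    have h5 : |m (j + 1) - m j| * vn n ≤ a * (1 + 2 ^ n) := by
      have hrn : 0 < r ^ n := by positivity
      have : (|m (j + 1) - m j| * vn n) * r ^ n ≤ (a * (1 + 2 ^ n)) * r ^ n := by
        calc _ = |m (j + 1) - m j| * (r ^ n * vn n) := by ring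
          _ ≤ a * (2 * r) ^ n + a * r ^ n := by linarith
          _ = _ := by rw [mul_pow]; ring
      exact le_of_mul_le_mul_right this hrn
    have h6 : |m (j + 1) - m j| ≤ a * ((1 + 2 ^ n) / vn n) := by
      rw [← mul_div_assoc, le_div_iff₀ hv]; exact h5
    have h7 : |m (j + 1)| ≤ |m j| + |m (j + 1) - m j| := by
      calc |m (j + 1)| = |m j + (m (j + 1) - m j)| := by congr 1; ring
        _ ≤ _ := abs_add_le _ _
    push_cast
    linarith

namespace KF
variable {n : ℕ} {K : ℕ → EE n → EE n → ℝ} {C R : ℝ}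

theorem integK (h : KF K C R) (j : ℕ) (x : EE n) : Integrable fun y => K j x y :=
  int_of_supp volume ((h.gk j).cont1 x) (R := R) fun y hy => (h.gk j).sy x y hy

theorem low (h : KF K C R) {f : EE n → ℝ} (hf : Continuous f) {x0 x : EE n} {a m : ℝ} {j : ℕ}
    (hx : ‖x - x0‖ ≤ (1 / 2) ^ j)
    (hm : ∫ y in ball x0 ((4 * R + 2) * (1 / 2) ^ j), |f y - m| ≤ a * ((4 * R + 2) * (1 / 2) ^ j) ^ n) :
    |(∫ y, K j x y * f y) - ∫ y, K j x0 y * f y| ≤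
      C * (4 * R + 2) ^ n * a * (2 ^ j * ‖x - x0‖) + |m| * (2 * C * (1 / 2) ^ j) := by
  have hC := h.hC
  have hR := h.hR
  have hq : (0:ℝ) < (1 / 2) ^ j := by positivity
  have hg := h.gk j
  have i1 : Integrable fun y => K j x y * (f y - m) := hg.integ x (by fun_prop)
  have i2 : Integrable fun y => K j x0 y * (f y - m) := hg.integ x0 (by fun_prop)
  have e1 : ∀ z, ∫ y, K j z y * f y = (∫ y, K j z y * (f y - m)) + m * ∫ y, K j z y := by
    intro z
    rw [← integral_const_mul, ← integral_add (hg.integ z (by fun_prop)) ((h.integK j z).const_mul _)]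
    congr 1; ext y; ring
  rw [e1, e1]
  have key : |(∫ y, K j x y * (f y - m)) - ∫ y, K j x0 y * (f y - m)| ≤ C * (4 * R + 2) ^ n * a * (2 ^ j * ‖x - x0‖) := by
    rw [← integral_sub i1 i2]
    have c1 : Continuous fun y => C * (2 ^ j) ^ (n + 1) * ‖x - x0‖ * |f y - m| := by fun_prop
    have := norm_integral_le_of_norm_le (μ := volume) (f := fun y => K j x y * (f y - m) - K j x0 y * (f y - m))
      (g := (ball x0 ((4 * R + 2) * (1 / 2) ^ j)).indicator fun y => C * (2 ^ j) ^ (n + 1) * ‖x - x0‖ * |f y - m|)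
      ((integrable_indicator_iff measurableSet_ball).2 (intOn_ball c1 _ _)) (Eventually.of_forall fun y => by
        by_cases hy : y ∈ ball x0 ((4 * R + 2) * (1 / 2) ^ j)
        · rw [indicator_of_mem hy, ← sub_mul, norm_mul]
          refine mul_le_mul_of_nonneg_right ?_ (abs_nonneg _)
          simpa using hg.lip x y x0 y
        · rw [indicator_of_notMem hy]
          rw [mem_ball, dist_eq_norm, not_lt] at hy
          have t : ‖y - x0‖ ≤ ‖x - y‖ + ‖x - x0‖ := by
            rw [norm_sub_rev x y]
            calc ‖y - x0‖ = ‖(y - x) + (x - x0)‖ := by congr 1; abel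
              _ ≤ _ := norm_add_le _ _
          rw [h.supp j x y (by nlinarith), h.supp j x0 y (by rw [norm_sub_rev]; nlinarith)]
          simp)
    rw [integral_indicator measurableSet_ball, integral_const_mul] at this
    refine this.trans ?_
    calc _ ≤ C * (2 ^ j) ^ (n + 1) * ‖x - x0‖ * (a * ((4 * R + 2) * (1 / 2) ^ j) ^ n) := by gcongr
      _ = C * (4 * R + 2) ^ n * a * (2 ^ j * ‖x - x0‖) * ((2 ^ j) * (1 / 2) ^ j) ^ n := by
        rw [mul_pow, mul_pow]; ring
      _ = _ := by rw [← mul_pow]; norm_num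
  have k2 : |m * (∫ y, K j x y) - m * ∫ y, K j x0 y| ≤ |m| * (2 * C * (1 / 2) ^ j) := by
    rw [← mul_sub, abs_mul]
    gcongr
    refine (abs_sub _ _).trans ?_
    linarith [h.int1 j x, h.int1 j x0]
  calc _ = |((∫ y, K j x y * (f y - m)) - ∫ y, K j x0 y * (f y - m)) + (m * (∫ y, K j x y) - m * ∫ y, K j x0 y)| := by
        congr 1; ring
    _ ≤ _ := abs_add_le _ _
    _ ≤ _ := add_le_add key k2

theorem lowsum (h : KF K C R) {f : EE n → ℝ} (hf : Continuous f) {x0 x : EE n} {a r : ℝ} (ha : 0 < a) {m : ℕ → ℝ} (hm0 : m 0 = 0)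
    (hm : ∀ j, ∫ y in ball x0 ((4 * R + 2) * (1 / 2) ^ j), |f y - m j| ≤ a * ((4 * R + 2) * (1 / 2) ^ j) ^ n) {J : ℕ}
    (hr : r ≤ (1 / 2) ^ J) (hx : ‖x - x0‖ ≤ r) :
    |(∑ j ∈ Finset.range (J + 1), ∫ y, K j x y * f y) - ∑ j ∈ Finset.range (J + 1), ∫ y, K j x0 y * f y| ≤
      C * (2 * (4 * R + 2) ^ n + 4 * ((1 + 2 ^ n) / vn n)) * a := by
  have hC := h.hC
  have hR := h.hR
  have hv := vn_pos n
  rw [← Finset.sum_sub_distrib]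
  refine (Finset.abs_sum_le_sum_abs _ _).trans ?_
  have : ∀ j ∈ Finset.range (J + 1), |(∫ y, K j x y * f y) - ∫ y, K j x0 y * f y| ≤
      C * (4 * R + 2) ^ n * a * (1 / 2) ^ J * 2 ^ j + a * ((1 + 2 ^ n) / vn n) * (2 * C) * (j * (1 / 2) ^ j) := by
    intro j hj
    have hjJ : j ≤ J := by simp at hj; omega
    have hxJ := hx.trans hr
    refine (h.low hf (hxJ.trans (pow_le_pow_of_le_one (by norm_num) (by norm_num) hjJ)) (hm j)).trans ?_
    refine add_le_add ?_ ?_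
    · calc _ ≤ C * (4 * R + 2) ^ n * a * (2 ^ j * (1 / 2) ^ J) := by gcongr
        _ = _ := by ring
    · calc _ ≤ (j * (a * ((1 + 2 ^ n) / vn n))) * (2 * C * (1 / 2) ^ j) := by
            gcongr; exact chain hf (by positivity) hm0 hm j
        _ = _ := by ring
  refine (Finset.sum_le_sum this).trans ?_
  rw [Finset.sum_add_distrib, ← Finset.mul_sum, ← Finset.mul_sum]
  have s1 := sum_two_pow J
  have s2 := sum_j_half (J + 1)
  have h2 : (2:ℝ) ^ J * (1 / 2) ^ J = 1 := by rw [← mul_pow]; norm_num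
  calc _ ≤ C * (4 * R + 2) ^ n * a * (1 / 2) ^ J * (2 * 2 ^ J) + a * ((1 + 2 ^ n) / vn n) * (2 * C) * 2 := by gcongr
    _ = C * (4 * R + 2) ^ n * a * 2 * (2 ^ J * (1 / 2) ^ J) + a * ((1 + 2 ^ n) / vn n) * (2 * C) * 2 := by ring
    _ = _ := by rw [h2]; ring

end KF


theorem cutoff {n : ℕ} (x0 : EE n) {t : ℝ} (ht : 0 < t) : ∃ η : EE n → ℝ, Continuous η ∧ (∀ y, |η y| ≤ 1) ∧
    (∀ y, ‖y - x0‖ ≤ t → η y = 1) ∧ ∀ y, 2 * t ≤ ‖y - x0‖ → η y = 0 := by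
  refine ⟨fun y => max 0 (min 1 (2 - ‖y - x0‖ / t)), by fun_prop, fun y => ?_, fun y hy => ?_, fun y hy => ?_⟩
  · rw [abs_of_nonneg (le_max_left _ _)]
    exact max_le zero_le_one (min_le_left _ _)
  · have : ‖y - x0‖ / t ≤ 1 := (div_le_one ht).2 hy
    show max 0 (min 1 (2 - ‖y - x0‖ / t)) = _
    rw [min_eq_left (by linarith)]; simp
  · have : 2 ≤ ‖y - x0‖ / t := (le_div_iff₀ ht).2 hy
    show max 0 (min 1 (2 - ‖y - x0‖ / t)) = _
    rw [max_eq_left]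
    exact (min_le_right _ _).trans (by linarith)

theorem amgm_int {n : ℕ} {G : EE n → ℝ} (hG : Continuous G) {x : EE n} {r a Q : ℝ} (hr : 0 < r) (ha : 0 < a)
    (h : ∫ y in ball x r, G y ^ 2 ≤ Q * a ^ 2 * r ^ n) :
    ∫ y in ball x r, |G y| ≤ (Q + vn n) * a * r ^ n := by
  have hv := vn_pos n
  have h0 : 0 ≤ ∫ y in ball x r, G y ^ 2 := integral_nonneg fun y => sq_nonneg _
  have h1 : ∫ y in ball x r, |G y| ≤ ∫ y in ball x r, (a⁻¹ * G y ^ 2 + a) := by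
    refine setIntegral_mono (intOn_ball (by fun_prop) _ _) (intOn_ball (by fun_prop) _ _) fun y => ?_
    simp only
    have : 0 ≤ a⁻¹ * (|G y| - a) ^ 2 := by positivity
    have e : a⁻¹ * (|G y| - a) ^ 2 = a⁻¹ * G y ^ 2 - 2 * |G y| + a := by
      rw [sub_sq, sq_abs]; field_simp
    have := abs_nonneg (G y)
    linarith
  rw [integral_add (intOn_ball (by fun_prop) _ _) (intOn_ball (by fun_prop) _ _), integral_const_mul,
    int_const_ball _ _ hr] at h1
  calc _ ≤ _ := h1
    _ ≤ a⁻¹ * (Q * a ^ 2 * r ^ n) + a * (r ^ n * vn n) := by gcongr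
    _ = _ := by field_simp

namespace KF
variable {n : ℕ} {K : ℕ → EE n → EE n → ℝ} {C R : ℝ}

/-- the local estimate for partial sums -/
theorem loc (h : KF K C R) {b : EE n → ℝ} {Cb : ℝ} (hb : BL b Cb R) : ∃ Q, 0 ≤ Q ∧ ∀ (f : EE n → ℝ) (Kf M : ℝ),
    (∀ x y, |f x - f y| ≤ Kf * ‖x - y‖) → (∀ x, |f x| ≤ M) → ∀ a : ℝ, 0 < a →
    (∀ x r, 0 < r → ∃ m, ∫ y in ball x r, |f y - m| ≤ a * r ^ n) →
    (∀ x r, 1 < r → ∫ y in ball x r, |f y| ≤ a * r ^ n) →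
    ∀ x r, 0 < r → r ≤ 1 → ∃ J c, ∀ N, J < N →
      ∫ y in ball x r, |(∑ j ∈ Finset.range N, ∫ z, K j y z * f z) + b y * f y - c| ≤ Q * a * r ^ n := by
  have hC := h.hC
  have hR := h.hR
  have hv := vn_pos n
  have hCb := hb.hL
  obtain ⟨M2, hM2, hl2⟩ := h.l2
  obtain ⟨Cj, hCj, hjn⟩ := jn_ball n
  set P := 4 * R + 2 with hP
  have hP0 : 0 < P := by positivity
  set D := (1 + 2 ^ n) / vn n with hD
  have hD0 : 0 < D := by positivity
  set Q1 := C * (2 * P ^ n + 4 * D) with hQ1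
  set Q2 := M2 * Cj * (2 * P) ^ n with hQ2
  have hQ10 : 0 ≤ Q1 := by positivity
  have hQ20 : 0 ≤ Q2 := by positivity
  refine ⟨(Q1 + D * C + Cb * D) * vn n + (Q2 + vn n) + Cb * (2 * P) ^ n, by positivity, ?_⟩
  intro f Kf M hK hM a ha hosc hbig x0 r hr hr1
  have hf := cont_of_lip hK
  obtain ⟨J, hJ1, hJ2⟩ := exists_nat_pow_near_of_lt_one hr hr1 (by norm_num : (0:ℝ) < 1 / 2) (by norm_num)
  have hq : (0:ℝ) < (1 / 2) ^ J := by positivity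
  have hJ3 : (1 / 2 : ℝ) ^ J ≤ 2 * r := by rw [pow_succ] at hJ1; linarith
  have hex : ∀ j : ℕ, ∃ m, (j = 0 → m = 0) ∧ ∫ y in ball x0 (P * (1 / 2) ^ j), |f y - m| ≤ a * (P * (1 / 2) ^ j) ^ n := by
    intro j
    rcases Nat.eq_zero_or_pos j with rfl | hj
    · refine ⟨0, fun _ => rfl, ?_⟩
      simpa using hbig x0 P (by linarith)
    · obtain ⟨m, hm⟩ := hosc x0 (P * (1 / 2) ^ j) (by positivity)
      exact ⟨m, fun h0 => by omega, hm⟩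
  choose m hm0 hm using hex
  have hm00 := hm0 0 rfl
  have hmJ : |m J| ≤ J * (a * D) := chain hf hP0 hm00 hm J
  set t := (2 * R + 1) * (1 / 2 : ℝ) ^ J with ht
  have ht0 : 0 < t := by positivity
  obtain ⟨η, hη1, hη2, hη3, hη4⟩ := cutoff x0 ht0
  have hFc : Continuous fun y => (f y - m J) * η y := by fun_prop
  have hFb : ∀ y, ‖(f y - m J) * η y‖ ≤ M + |m J| := by
    intro y
    rw [norm_mul]
    calc _ ≤ (M + |m J|) * 1 := by
          refine mul_le_mul ?_ (hη2 y) (norm_nonneg _) ?_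
          · exact (abs_sub _ _).trans (by linarith [hM y])
          · linarith [abs_nonneg (m J), (abs_nonneg _).trans (hM y)]
      _ = _ := mul_one _
  set F : EE n →ᵇ ℝ := BoundedContinuousFunction.ofNormedAddCommGroup (fun y => (f y - m J) * η y) hFc _ hFb with hF
  have hFy : ∀ y, F y = (f y - m J) * η y := fun y => rfl
  have htP : 2 * t = P * (1 / 2) ^ J := by rw [ht, hP]; ring
  have hPr : P * (1 / 2) ^ J ≤ 2 * P * r := by nlinarith
  -- L2 bound of F
  have hF2 : ∫ x in ball 0 R, F x ^ 2 ≤ Cj * (2 * P) ^ n * a ^ 2 * r ^ n := by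
    have c1 : Continuous fun y => (f y - m J) ^ 2 := by fun_prop
    calc ∫ x in ball 0 R, F x ^ 2 ≤ ∫ x, F x ^ 2 := by
          refine setIntegral_le_integral ?_ (Eventually.of_forall fun y => sq_nonneg _)
          refine (F.continuous.pow 2).integrable_of_hasCompactSupport
            (HasCompactSupport.intro (isCompact_closedBall x0 (2 * t)) fun y hy => ?_)
          rw [mem_closedBall, dist_eq_norm, not_le] at hy
          show F y ^ 2 = 0
          rw [hFy, hη4 y hy.le]; ring
      _ = ∫ x in ball x0 (2 * t), F x ^ 2 := by
          symm
          refine setIntegral_eq_integral_of_forall_compl_eq_zero fun y hy => ?_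
          rw [mem_ball, dist_eq_norm, not_lt] at hy
          rw [hFy, hη4 y hy]; ring
      _ ≤ ∫ x in ball x0 (2 * t), (f x - m J) ^ 2 := by
          refine setIntegral_mono (intOn_ball (F.continuous.pow 2) _ _) (intOn_ball c1 _ _) fun y => ?_
          simp only [hFy, mul_pow]
          have : η y ^ 2 ≤ 1 := by rw [← sq_abs]; exact pow_le_one₀ (abs_nonneg _) (hη2 y)
          nlinarith [sq_nonneg (f y - m J)]
      _ ≤ Cj * a ^ 2 * (2 * t) ^ n := by
          rw [htP]
          exact hjn f Kf M hf hK hM a ha hosc x0 _ (m J) (by positivity) (hm J)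
      _ ≤ Cj * a ^ 2 * (2 * P * r) ^ n := by rw [htP]; gcongr
      _ = _ := by rw [mul_pow]; ring
  refine ⟨J, (∑ j ∈ Finset.range (J + 1), ∫ y, K j x0 y * f y) + b x0 * m J, fun N hN => ?_⟩
  set G : EE n → ℝ := fun x => ∑ j ∈ Finset.Ico (J + 1) N, ∫ y, K j x y * F y with hG
  have hGc : Continuous G := by
    refine continuous_finsetSum _ fun j _ => (h.gk j).int_cont F.continuous (fun y => F.norm_coe_le_norm y)
  have hGs : ∀ x, R ≤ ‖x‖ → G x = 0 := by
    intro x hx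
    refine Finset.sum_eq_zero fun j _ => ?_
    simp [(h.gk j).sx x _ hx]
  have hG2 : ∫ x in ball x0 r, G x ^ 2 ≤ Q2 * a ^ 2 * r ^ n := by
    calc ∫ x in ball x0 r, G x ^ 2 ≤ ∫ x, G x ^ 2 := by
          refine setIntegral_le_integral ?_ (Eventually.of_forall fun y => sq_nonneg _)
          exact int_of_supp volume (hGc.pow 2) (R := R) fun y hy => by rw [hGs y hy]; ring
      _ = ∫ x in ball 0 R, G x ^ 2 := by
          symm
          refine setIntegral_eq_integral_of_forall_compl_eq_zero fun y hy => ?_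
          rw [mem_ball, dist_zero_right, not_lt] at hy
          rw [hGs y hy]; ring
      _ ≤ M2 * ∫ x in ball 0 R, F x ^ 2 := hl2 _ F
      _ ≤ M2 * (Cj * (2 * P) ^ n * a ^ 2 * r ^ n) := by gcongr
      _ = _ := by rw [hQ2]; ring
  have hG1 := amgm_int hGc hr ha hG2
  have hpt : ∀ x ∈ ball x0 r, |(∑ j ∈ Finset.range N, ∫ z, K j x z * f z) + b x * f x -
      ((∑ j ∈ Finset.range (J + 1), ∫ y, K j x0 y * f y) + b x0 * m J)| ≤
      (Q1 + D * C + Cb * D) * a + |G x| + Cb * |f x - m J| := by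
    intro x hx
    rw [mem_ball, dist_eq_norm] at hx
    have e1 : ∑ j ∈ Finset.range N, ∫ z, K j x z * f z =
        (∑ j ∈ Finset.range (J + 1), ∫ z, K j x z * f z) + (G x + m J * ∑ j ∈ Finset.Ico (J + 1) N, ∫ z, K j x z) := by
      rw [← Finset.sum_range_add_sum_Ico _ (by omega : J + 1 ≤ N)]
      congr 1
      rw [hG, Finset.mul_sum, ← Finset.sum_add_distrib]
      refine Finset.sum_congr rfl fun j hj => ?_
      have hj : J ≤ j := by simp at hj; omega
      rw [← integral_const_mul, ← integral_add ((h.gk j).integ x F.continuous) ((h.integK j x).const_mul _)]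
      congr 1; ext y
      by_cases hk : 2 * R * (1 / 2) ^ j ≤ ‖x - y‖
      · rw [h.supp j x y hk]; simp
      · push Not at hk
        have hjJ : (1 / 2 : ℝ) ^ j ≤ (1 / 2) ^ J := pow_le_pow_of_le_one (by norm_num) (by norm_num) hj
        have t1 : ‖y - x0‖ ≤ ‖x - y‖ + ‖x - x0‖ := by
          rw [norm_sub_rev x y]
          calc ‖y - x0‖ = ‖(y - x) + (x - x0)‖ := by congr 1; abel
            _ ≤ _ := norm_add_le _ _
        rw [hFy, hη3 y (by rw [ht]; nlinarith)]; ring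
    have k1 := h.lowsum hf ha hm00 hm hJ2 hx.le
    have k2 : |m J * ∑ j ∈ Finset.Ico (J + 1) N, ∫ z, K j x z| ≤ D * C * a := by
      rw [abs_mul]
      have s1 : |∑ j ∈ Finset.Ico (J + 1) N, ∫ z, K j x z| ≤ C * (1 / 2) ^ J := by
        refine (Finset.abs_sum_le_sum_abs _ _).trans ((Finset.sum_le_sum fun j _ => h.int1 j x).trans ?_)
        rw [← Finset.mul_sum]
        gcongr
        exact sum_Ico_half J N
      calc _ ≤ (J * (a * D)) * (C * (1 / 2) ^ J) := by gcongr
        _ = (D * C * a) * (J * (1 / 2) ^ J) := by ring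
        _ ≤ (D * C * a) * 1 := by gcongr; exact j_half J
        _ = _ := by ring
    have k3 : |b x * f x - b x0 * m J| ≤ Cb * |f x - m J| + Cb * D * a := by
      have e : b x * f x - b x0 * m J = b x * (f x - m J) + (b x - b x0) * m J := by ring
      rw [e]
      refine (abs_add_le _ _).trans ?_
      rw [abs_mul, abs_mul]
      refine add_le_add ?_ ?_
      · gcongr; exact hb.b x
      · calc _ ≤ (Cb * (1 / 2) ^ J) * (J * (a * D)) := by
              gcongr
              exact (hb.l x x0).trans (by gcongr; exact hx.le.trans hJ2)
          _ = (Cb * D * a) * (J * (1 / 2) ^ J) := by ring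
          _ ≤ (Cb * D * a) * 1 := by gcongr; exact j_half J
          _ = _ := by ring
    rw [e1]
    set S1 := ∑ j ∈ Finset.range (J + 1), ∫ z, K j x z * f z
    set S2 := ∑ j ∈ Finset.range (J + 1), ∫ z, K j x0 z * f z
    set S3 := m J * ∑ j ∈ Finset.Ico (J + 1) N, ∫ z, K j x z
    have e : S1 + (G x + S3) + b x * f x - (S2 + b x0 * m J) = (S1 - S2) + G x + (S3 + (b x * f x - b x0 * m J)) := by ring
    rw [e]
    refine (abs_add_three _ _ _).trans ?_
    have := abs_add_le S3 (b x * f x - b x0 * m J)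
    linarith
  have c1 : Continuous fun x => |f x - m J| := by fun_prop
  have hfm : ∫ x in ball x0 r, |f x - m J| ≤ a * (2 * P) ^ n * r ^ n := by
    calc _ ≤ ∫ x in ball x0 (P * (1 / 2) ^ J), |f x - m J| :=
          int_ball_mono c1 (fun y => abs_nonneg _) (ball_subset_ball (by nlinarith))
      _ ≤ a * (P * (1 / 2) ^ J) ^ n := hm J
      _ ≤ a * (2 * P * r) ^ n := by gcongr
      _ = _ := by rw [mul_pow]; ring
  calc _ ≤ ∫ x in ball x0 r, ((Q1 + D * C + Cb * D) * a + |G x| + Cb * |f x - m J|) := by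
        refine integral_mono_of_nonneg (Eventually.of_forall fun y => abs_nonneg _) (intOn_ball (by fun_prop) _ _) ?_
        exact (ae_restrict_iff' measurableSet_ball).2 (Eventually.of_forall hpt)
    _ = (Q1 + D * C + Cb * D) * a * (r ^ n * vn n) + (∫ x in ball x0 r, |G x|) + Cb * ∫ x in ball x0 r, |f x - m J| := by
        rw [integral_add (intOn_ball (by fun_prop) _ _) (intOn_ball (by fun_prop) _ _),
          integral_add (intOn_ball (by fun_prop) _ _) (intOn_ball (by fun_prop) _ _), int_const_ball _ _ hr, integral_const_mul Cb]
    _ ≤ (Q1 + D * C + Cb * D) * a * (r ^ n * vn n) + (Q2 + vn n) * a * r ^ n + Cb * (a * (2 * P) ^ n * r ^ n) := by gcongr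
    _ = _ := by ring

theorem glob (h : KF K C R) {b : EE n → ℝ} {Cb : ℝ} (hb : BL b Cb R) : ∃ Q, 0 ≤ Q ∧ ∀ (f : EE n → ℝ) (Kf M : ℝ),
    (∀ x y, |f x - f y| ≤ Kf * ‖x - y‖) → (∀ x, |f x| ≤ M) → ∀ a : ℝ, 0 < a →
    (∀ x r, 0 < r → ∃ m, ∫ y in ball x r, |f y - m| ≤ a * r ^ n) →
    (∀ x r, 1 < r → ∫ y in ball x r, |f y| ≤ a * r ^ n) →
    ∀ N, ∫ y in ball 0 R, |(∑ j ∈ Finset.range N, ∫ z, K j y z * f z) + b y * f y| ≤ Q * a := by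
  have hC := h.hC
  have hR := h.hR
  have hv := vn_pos n
  have hCb := hb.hL
  obtain ⟨M2, hM2, hl2⟩ := h.l2
  obtain ⟨Cj, hCj, hjn⟩ := jn_ball n
  refine ⟨(M2 * Cj * (R + 1) ^ n + vn n) * R ^ n + Cb * (R + 1) ^ n, by positivity, ?_⟩
  intro f Kf M hK hM a ha hosc hbig N
  have hf := cont_of_lip hK
  have hbc := hb.cont
  set F : EE n →ᵇ ℝ := BoundedContinuousFunction.ofNormedAddCommGroup f hf M hM with hF
  have hFy : ∀ y, F y = f y := fun y => rfl
  set G : EE n → ℝ := fun x => ∑ j ∈ Finset.range N, ∫ y, K j x y * f y with hG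
  have hGc : Continuous G := by
    refine continuous_finsetSum _ fun j _ => (h.gk j).int_cont hf hM
  have c0 : Continuous fun y => f y ^ 2 := by fun_prop
  have c1 : Continuous fun y => |f y| := by fun_prop
  have h1 := hbig 0 (R + 1) (by linarith)
  have hf2 : ∫ x in ball 0 R, f x ^ 2 ≤ Cj * a ^ 2 * (R + 1) ^ n := by
    refine (int_ball_mono c0 (fun y => sq_nonneg _) (ball_subset_ball (by linarith : R ≤ R + 1))).trans ?_
    have := hjn f Kf M hf hK hM a ha hosc 0 (R + 1) 0 (by linarith) (by simpa using h1)
    simpa using this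
  have hG2 : ∫ x in ball 0 R, G x ^ 2 ≤ (M2 * Cj * (R + 1) ^ n) * a ^ 2 * R ^ n := by
    have h2 := hl2 (Finset.range N) F
    simp only [hFy] at h2
    have : 1 ≤ R ^ n := one_le_pow₀ hR
    calc _ ≤ M2 * ∫ x in ball 0 R, f x ^ 2 := h2
      _ ≤ M2 * (Cj * a ^ 2 * (R + 1) ^ n) := by gcongr
      _ = (M2 * Cj * (R + 1) ^ n) * a ^ 2 * 1 := by ring
      _ ≤ _ := by gcongr
  have hG1 := amgm_int hGc (by linarith) ha hG2
  have hb1 : ∫ x in ball 0 R, |b x * f x| ≤ Cb * (a * (R + 1) ^ n) := by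
    calc _ ≤ ∫ x in ball 0 R, Cb * |f x| := by
          refine setIntegral_mono (intOn_ball (by fun_prop) _ _) (intOn_ball (by fun_prop) _ _) fun y => ?_
          simp only [abs_mul]
          gcongr
          exact hb.b y
      _ = Cb * ∫ x in ball 0 R, |f x| := integral_const_mul _ _
      _ ≤ _ := by
          gcongr
          exact (int_ball_mono c1 (fun y => abs_nonneg _) (ball_subset_ball (by linarith : R ≤ R + 1))).trans h1
  calc _ ≤ ∫ x in ball 0 R, (|G x| + |b x * f x|) := by
        refine integral_mono_of_nonneg (Eventually.of_forall fun y => abs_nonneg _) (intOn_ball (by fun_prop) _ _) (Eventually.of_forall fun y => abs_add_le _ _)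
    _ = (∫ x in ball 0 R, |G x|) + ∫ x in ball 0 R, |b x * f x| :=
        integral_add (intOn_ball (by fun_prop) _ _) (intOn_ball (by fun_prop) _ _)
    _ ≤ (M2 * Cj * (R + 1) ^ n + vn n) * a * R ^ n + Cb * (a * (R + 1) ^ n) := by gcongr
    _ = _ := by ring

end KF

theorem mk_BL {n : ℕ} {g : EE n → ℝ} (hg : ContDiff ℝ (⊤ : ℕ∞) g) (hc : HasCompactSupport g) :
    ∃ L0 R0, ∀ L R, L0 ≤ L → R0 ≤ R → BL g L R := by
  obtain ⟨C, hC⟩ := hc.exists_bound_of_continuous hg.continuous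
  obtain ⟨K, hK⟩ := ContDiff.lipschitzWith_of_hasCompactSupport hc hg (by simp)
  obtain ⟨r, hr⟩ := hc.isBounded.subset_ball 0
  refine ⟨max C K, r, fun L R hL hR => ⟨?_, fun x => ?_, fun x y => ?_, fun x hx => ?_⟩⟩
  · exact K.2.trans ((le_max_right _ _).trans hL)
  · exact (hC x).trans ((le_max_left _ _).trans hL)
  · have := hK.dist_le_mul x y
    rw [Real.dist_eq, dist_eq_norm] at this
    refine this.trans ?_
    gcongr
    exact (le_max_right _ _).trans hL
  · by_contra h0
    have := hr (subset_tsupport g h0)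
    rw [mem_ball, dist_zero_right] at this
    linarith

theorem avg_ball {n : ℕ} (F : EE n → ℝ) (x : EE n) {r : ℝ} (hr : 0 < r) :
    ⨍ y in ball x r, F y = (r ^ n * vn n)⁻¹ * ∫ y in ball x r, F y := by
  rw [setAverage_eq, vol_ball x hr, smul_eq_mul]

theorem avg_le {n : ℕ} {F : EE n → ℝ} {x : EE n} {r Q : ℝ} (hr : 0 < r)
    (h : ∫ y in ball x r, F y ≤ Q * r ^ n) : ⨍ y in ball x r, F y ≤ Q / vn n := by
  have := vn_pos n
  rw [avg_ball F x hr, inv_mul_le_iff₀ (by positivity)]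
  refine h.trans (le_of_eq ?_)
  field_simp

theorem int_le_of_avg {n : ℕ} {F : EE n → ℝ} {x : EE n} {r Q : ℝ} (hr : 0 < r)
    (h : ⨍ y in ball x r, F y ≤ Q) : ∫ y in ball x r, F y ≤ Q * vn n * r ^ n := by
  have := vn_pos n
  rw [avg_ball F x hr, inv_mul_le_iff₀ (by positivity)] at h
  linarith

/-- oscillation about the mean versus oscillation about a constant -/
theorem osc_mean {n : ℕ} {F : EE n → ℝ} (hF : Continuous F) {x : EE n} {r Q c : ℝ} (hr : 0 < r)
    (h : ∫ y in ball x r, |F y - c| ≤ Q * r ^ n) :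
    ∫ y in ball x r, |F y - ⨍ z in ball x r, F z| ≤ (2 * Q) * r ^ n := by
  have hv := vn_pos n
  set m := ⨍ z in ball x r, F z with hm
  have h1 : |c - m| * (r ^ n * vn n) ≤ Q * r ^ n := by
    have e : (c - m) * (r ^ n * vn n) = -∫ y in ball x r, (F y - c) := by
      rw [integral_sub (intOn_ball hF _ _) (intOn_ball continuous_const _ _), int_const_ball c x hr, hm,
        avg_ball F x hr]
      field_simp
      ring
    have e2 : |c - m| * (r ^ n * vn n) = |∫ y in ball x r, (F y - c)| := by
      rw [← abs_neg (∫ y in ball x r, (F y - c)), ← e, abs_mul, abs_of_pos (a := r ^ n * vn n) (by positivity)]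
    rw [e2]
    exact (abs_integral_le_integral_abs).trans h
  calc _ ≤ ∫ y in ball x r, (|F y - c| + |c - m|) := by
        refine setIntegral_mono (intOn_ball (by fun_prop) _ _) (intOn_ball (by fun_prop) _ _) fun y => ?_
        exact abs_sub_le _ _ _
    _ = (∫ y in ball x r, |F y - c|) + |c - m| * (r ^ n * vn n) := by
        rw [integral_add (intOn_ball (by fun_prop) _ _) (intOn_ball (by fun_prop) _ _), int_const_ball _ _ hr]
    _ ≤ _ := by linarith

theorem avg_nonneg {n : ℕ} {F : EE n → ℝ} (h : ∀ y, 0 ≤ F y) (x : EE n) (r : ℝ) : 0 ≤ ⨍ y in ball x r, F y := by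
  rw [setAverage_eq]
  exact smul_nonneg (by positivity) (integral_nonneg h)

theorem avg_bd {n : ℕ} {F : EE n → ℝ} (hF : Continuous F) {M : ℝ} (h : ∀ y, F y ≤ M) (x : EE n) {r : ℝ} (hr : 0 < r) :
    ⨍ y in ball x r, F y ≤ M := by
  have hv := vn_pos n
  have : ∫ y in ball x r, F y ≤ (M * vn n) * r ^ n := by
    calc _ ≤ ∫ y in ball x r, M := setIntegral_mono (intOn_ball hF _ _) (intOn_ball continuous_const _ _) h
      _ = _ := by rw [int_const_ball _ _ hr]; ring
  refine (avg_le hr this).trans (le_of_eq ?_)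
  field_simp

theorem bmo_spec {n : ℕ} {f : EE n → ℝ} (hf : Continuous f) {M : ℝ} (hM : ∀ x, |f x| ≤ M) :
    0 ≤ bmoNorm n f ∧ (∀ x r, 0 < r → r ≤ 1 → ⨍ y in ball x r, |f y - ⨍ z in ball x r, f z| ≤ bmoNorm n f) ∧
    (∀ x r, 1 < r → ⨍ y in ball x r, |f y| ≤ bmoNorm n f) := by
  have b1 : BddAbove (range fun p : {p : EuclideanSpace ℝ (Fin n) × ℝ // 0 < p.2 ∧ p.2 ≤ 1} =>
      ⨍ y in ball p.1.1 p.1.2, |f y - ⨍ z in ball p.1.1 p.1.2, f z|) := by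
    refine ⟨M + M, ?_⟩
    rintro _ ⟨⟨⟨x, r⟩, hr, hr1⟩, rfl⟩
    simp only at hr hr1 ⊢
    refine avg_bd (by fun_prop) (fun y => ?_) x hr
    refine (abs_sub _ _).trans (add_le_add (hM y) (abs_le.2 ⟨?_, ?_⟩))
    · have := avg_bd (F := fun z => - f z) (by fun_prop) (fun y => (neg_le_abs _).trans (hM y)) x hr
      have e : ⨍ z in ball x r, - f z = - ⨍ z in ball x r, f z := by
        rw [avg_ball _ _ hr, avg_ball _ _ hr, integral_neg]; ring
      linarith
    · exact avg_bd hf (fun y => (le_abs_self _).trans (hM y)) x hr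
  have b2 : BddAbove (range fun p : {p : EuclideanSpace ℝ (Fin n) × ℝ // 1 < p.2} =>
      ⨍ y in ball p.1.1 p.1.2, |f y|) := by
    refine ⟨M, ?_⟩
    rintro _ ⟨⟨⟨x, r⟩, hr⟩, rfl⟩
    simp only at hr ⊢
    exact avg_bd (by fun_prop) hM x (by linarith)
  have n1 : 0 ≤ ⨆ p : {p : EuclideanSpace ℝ (Fin n) × ℝ // 0 < p.2 ∧ p.2 ≤ 1},
      ⨍ y in ball p.1.1 p.1.2, |f y - ⨍ z in ball p.1.1 p.1.2, f z| :=
    Real.iSup_nonneg fun p => avg_nonneg (fun y => abs_nonneg _) _ _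
  have n2 : 0 ≤ ⨆ p : {p : EuclideanSpace ℝ (Fin n) × ℝ // 1 < p.2}, ⨍ y in ball p.1.1 p.1.2, |f y| :=
    Real.iSup_nonneg fun p => avg_nonneg (fun y => abs_nonneg _) _ _
  refine ⟨add_nonneg n1 n2, fun x r hr hr1 => ?_, fun x r hr => ?_⟩
  · exact (le_ciSup b1 ⟨(x, r), hr, hr1⟩).trans (le_add_of_nonneg_right n2)
  · exact (le_ciSup b2 ⟨(x, r), hr⟩).trans (le_add_of_nonneg_left n1)

theorem bmo_le {n : ℕ} {g : EE n → ℝ} {A B : ℝ}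
    (h1 : ∀ x r, 0 < r → r ≤ 1 → ⨍ y in ball x r, |g y - ⨍ z in ball x r, g z| ≤ A)
    (h2 : ∀ x r, 1 < r → ⨍ y in ball x r, |g y| ≤ B) : bmoNorm n g ≤ A + B := by
  haveI : Nonempty {p : EuclideanSpace ℝ (Fin n) × ℝ // 0 < p.2 ∧ p.2 ≤ 1} := ⟨⟨(0, 1), by norm_num⟩⟩
  haveI : Nonempty {p : EuclideanSpace ℝ (Fin n) × ℝ // 1 < p.2} := ⟨⟨(0, 2), by norm_num⟩⟩
  exact add_le_add (ciSup_le fun p => h1 _ _ p.2.1 p.2.2) (ciSup_le fun p => h2 _ _ p.2)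

theorem Dat.Tp_cont {n : ℕ} {χ ψ f : EE n → ℝ} {R L M K : ℝ} (h : Dat χ ψ R L) (hM : ∀ x, |f x| ≤ M) (hK0 : 0 ≤ K)
    (hK : ∀ x y, |f x - f y| ≤ K * ‖x - y‖) : Continuous (Tp χ ψ f) := by
  obtain ⟨C, hC, hap⟩ := h.approx hM hK0 hK
  obtain ⟨C', hkf⟩ := h.kf
  have hl : Tendsto (fun N : ℕ => C * (1 / 2 : ℝ) ^ N) atTop (𝓝 0) := by
    have := (tendsto_pow_atTop_nhds_zero_of_lt_one (by norm_num : (0:ℝ) ≤ 1 / 2) (by norm_num)).const_mul C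
    simpa using this
  have hu : TendstoUniformly (fun N x => ∑ j ∈ Finset.range N, ∫ y, KK χ ψ j x y * f y) (Tp χ ψ f) atTop := by
    rw [Metric.tendstoUniformly_iff]
    intro ε hε
    filter_upwards [hl.eventually (gt_mem_nhds hε)] with N hN x
    rw [Real.dist_eq]
    exact (hap x N).trans_lt hN
  refine hu.continuous (Frequently.of_forall fun N => ?_)
  exact continuous_finsetSum _ fun j _ => (hkf.gk j).int_cont (cont_of_lip hK) hM

theorem Dat.Tp_zero {n : ℕ} {χ ψ f : EE n → ℝ} {R L : ℝ} (h : Dat χ ψ R L) {x : EE n} (hx : R ≤ ‖x‖) :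
    Tp χ ψ f x = 0 := by
  simp [Tp, kk, h.hχ.s x hx]

theorem small_pow {C a : ℝ} (ha : 0 < a) (J : ℕ) : ∃ N, J < N ∧ C * (1 / 2 : ℝ) ^ N ≤ a := by
  have hl : Tendsto (fun N : ℕ => C * (1 / 2 : ℝ) ^ N) atTop (𝓝 0) := by
    have := (tendsto_pow_atTop_nhds_zero_of_lt_one (by norm_num : (0:ℝ) ≤ 1 / 2) (by norm_num)).const_mul C
    simpa using this
  obtain ⟨N, h1, h2⟩ := ((hl.eventually (gt_mem_nhds ha)).and (eventually_gt_atTop J)).exists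
  exact ⟨N, h2, h1.le⟩

theorem close_int {n : ℕ} {F G : EE n → ℝ} (hF : Continuous F) (hG : Continuous G) {x : EE n} {r c ε Q : ℝ} (hr : 0 < r)
    (h : ∀ y, |F y - G y| ≤ ε) (hQ : ∫ y in ball x r, |G y - c| ≤ Q) :
    ∫ y in ball x r, |F y - c| ≤ Q + ε * (r ^ n * vn n) := by
  calc _ ≤ ∫ y in ball x r, (|G y - c| + ε) := by
        refine setIntegral_mono (intOn_ball (by fun_prop) _ _) (intOn_ball (by fun_prop) _ _) fun y => ?_
        have := abs_sub_le (F y) (G y) c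
        have := h y
        simp only
        linarith
    _ = (∫ y in ball x r, |G y - c|) + ε * (r ^ n * vn n) := by
        rw [integral_add (intOn_ball (by fun_prop) _ _) (intOn_ball (by fun_prop) _ _), int_const_ball _ _ hr]
    _ ≤ _ := by linarith

theorem Dat.bmo {n : ℕ} {χ ψ b : EE n → ℝ} {R L Cb : ℝ} (h : Dat χ ψ R L) (hb : BL b Cb R) :
    ∃ Q, 0 ≤ Q ∧ ∀ (f : EE n → ℝ) (M K : ℝ), (∀ x, |f x| ≤ M) → 0 ≤ K →
      (∀ x y, |f x - f y| ≤ K * ‖x - y‖) →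
      bmoNorm n (fun x => Tp χ ψ f x + b x * f x) ≤ Q * bmoNorm n f := by
  obtain ⟨C', hkf⟩ := h.kf
  obtain ⟨Q1, hQ1, hloc⟩ := hkf.loc hb
  obtain ⟨Q2, hQ2, hglob⟩ := hkf.glob hb
  have hv := vn_pos n
  have hR := h.hR
  refine ⟨2 * (Q1 + 1) + (Q2 + 1), by positivity, ?_⟩
  intro f M K hM hK0 hK
  have hf := cont_of_lip hK
  obtain ⟨A0, A1, A2⟩ := bmo_spec hf hM
  set A := bmoNorm n f
  have hTc := h.Tp_cont hM hK0 hK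
  have hbc := hb.cont
  obtain ⟨Cf, hCf, hap⟩ := h.approx hM hK0 hK
  set T : EE n → ℝ := fun x => Tp χ ψ f x + b x * f x with hT
  have hTcont : Continuous T := by fun_prop
  have hT0 : ∀ x, R ≤ ‖x‖ → T x = 0 := fun x hx => by simp [hT, h.Tp_zero hx, hb.s x hx]
  set S : ℕ → EE n → ℝ := fun N x => (∑ j ∈ Finset.range N, ∫ z, KK χ ψ j x z * f z) + b x * f x with hS
  have hSc : ∀ N, Continuous (S N) := fun N =>
    (continuous_finsetSum _ fun j _ => (hkf.gk j).int_cont hf hM).add (hbc.mul hf)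
  have hTS : ∀ N y, |T y - S N y| ≤ Cf * (1 / 2) ^ N := fun N y => by
    refine le_trans (le_of_eq ?_) (hap y N)
    congr 1
    simp only [hT, hS]
    ring
  have key : ∀ a, 0 < a → A * vn n ≤ a → bmoNorm n T ≤ (2 * (Q1 + 1) + (Q2 + 1)) * (a / vn n) := by
    intro a ha hAa
    have hbig : ∀ x r, 1 < r → ∫ y in ball x r, |f y| ≤ a * r ^ n := fun x r hr =>
      (int_le_of_avg (by linarith) (A2 x r hr)).trans (by gcongr)
    have hosc : ∀ x r, 0 < r → ∃ m, ∫ y in ball x r, |f y - m| ≤ a * r ^ n := by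
      intro x r hr
      rcases le_or_gt r 1 with h1 | h1
      · exact ⟨_, (int_le_of_avg hr (A1 x r hr h1)).trans (by gcongr)⟩
      · exact ⟨0, by simpa using hbig x r h1⟩
    have e : (2 * (Q1 + 1) + (Q2 + 1)) * (a / vn n) = (2 * ((Q1 + 1) * a)) / vn n + ((Q2 + 1) * a) / vn n := by ring
    rw [e]
    refine bmo_le (fun x r hr hr1 => ?_) fun x r hr => ?_
    · obtain ⟨J, c, hJ⟩ := hloc f K M hK hM a ha hosc hbig x r hr hr1
      obtain ⟨N, hN, hN2⟩ := small_pow (C := Cf) (a := a / vn n) (by positivity) J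
      refine avg_le hr (osc_mean hTcont hr (c := c) ?_)
      refine (close_int hTcont (hSc N) hr (hTS N) (hJ N hN)).trans ?_
      calc _ ≤ Q1 * a * r ^ n + a / vn n * (r ^ n * vn n) := by gcongr
        _ = _ := by field_simp
    · have hr0 : 0 < r := by linarith
      obtain ⟨N, hN, hN2⟩ := small_pow (C := Cf) (a := a / (R ^ n * vn n)) (by positivity) 0
      refine avg_le hr0 ?_
      have h1 : ∫ y in ball 0 R, |T y| ≤ (Q2 + 1) * a := by
        have h2 := close_int (c := 0) hTcont (hSc N) (by linarith) (hTS N) (x := 0) (r := R) (Q := Q2 * a)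
          (by simpa using hglob f K M hK hM a ha hosc hbig N)
        simp only [sub_zero] at h2
        refine h2.trans ?_
        calc _ ≤ Q2 * a + a / (R ^ n * vn n) * (R ^ n * vn n) := by gcongr
          _ = _ := by field_simp
      have h3 : ∫ y, |T y| = ∫ y in ball 0 R, |T y| := by
        symm
        refine setIntegral_eq_integral_of_forall_compl_eq_zero fun y hy => ?_
        rw [mem_ball, dist_zero_right, not_lt] at hy
        rw [hT0 y hy, abs_zero]
      calc ∫ y in ball x r, |T y| ≤ ∫ y, |T y| := by
            refine setIntegral_le_integral ?_ (Eventually.of_forall fun y => abs_nonneg _)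
            exact int_of_supp volume hTcont.abs (R := R) fun y hy => by rw [hT0 y hy, abs_zero]
        _ ≤ (Q2 + 1) * a * 1 := by rw [h3, mul_one]; exact h1
        _ ≤ _ := by gcongr; exact one_le_pow₀ hr.le
  have hQ : 0 < 2 * (Q1 + 1) + (Q2 + 1) := by positivity
  refine le_of_forall_pos_le_add fun δ hδ => ?_
  have := key ((A + δ / (2 * (Q1 + 1) + (Q2 + 1))) * vn n) (by positivity) (by gcongr; linarith [div_pos hδ hQ])
  refine this.trans (le_of_eq ?_)
  field_simp

/-- The singular integral operator with kernel
`H(x,y) = ∫₀¹ χ(x) χ(y) ψ(y + (x−y)/s) s^{−(n+1)} ds` is well defined as a principal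
value on bounded Lipschitz functions and is bounded in the `bmo` norm. -/
theorem singular_integral_bounded_on_bmo
    (n : ℕ) (hn : 2 ≤ n)
    (Ω B : Set (EuclideanSpace ℝ (Fin n)))
    (hΩo : IsOpen Ω) (hΩb : Bornology.IsBounded Ω)
    (hBball : ∃ c r, 0 < r ∧ B = Metric.ball c r)
    (hBΩ : B ⊆ Ω)
    (hstar : ∀ x ∈ Ω, ∀ y ∈ B, segment ℝ x y ⊆ Ω)
    (Bt : Set (EuclideanSpace ℝ (Fin n)))
    (hBt : ∃ c r, 0 < r ∧ Bt = Metric.ball c r)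
    (hΩBt : closure Ω ⊆ Bt)
    (χ : EuclideanSpace ℝ (Fin n) → ℝ)
    (hχ : ContDiff ℝ (⊤ : ℕ∞) χ) (hχc : HasCompactSupport χ)
    (hχsupp : tsupport χ ⊆ Bt) (hχ1 : ∀ x ∈ Ω, χ x = 1)
    (ψ : EuclideanSpace ℝ (Fin n) → ℝ)
    (hψ : ContDiff ℝ (⊤ : ℕ∞) ψ) (hψc : HasCompactSupport ψ)
    (hψsupp : tsupport ψ ⊆ B) (hψint : ∫ x, ψ x = 0)
    (H : EuclideanSpace ℝ (Fin n) → EuclideanSpace ℝ (Fin n) → ℝ)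
    (hH : ∀ x y, x ≠ y → H x y =
      ∫ s in Set.Ioo (0:ℝ) 1, χ x * χ y * ψ (y + s⁻¹ • (x - y)) * (s ^ (n + 1))⁻¹) :
    ∃ C : ℝ,
      ∀ f : EuclideanSpace ℝ (Fin n) → ℝ,
        (∃ M : ℝ, ∀ x, |f x| ≤ M) →
        (∃ K : ℝ, ∀ x y, |f x - f y| ≤ K * ‖x - y‖) →
        ∃ Tf : EuclideanSpace ℝ (Fin n) → ℝ,
          (∀ x : EuclideanSpace ℝ (Fin n),
            Tendsto (fun ε : ℝ =>
                ∫ y in {y : EuclideanSpace ℝ (Fin n) | ε < ‖x - y‖}, H x y * f y)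
              (𝓝[>] (0:ℝ)) (𝓝 (Tf x))) ∧
          bmoNorm n Tf ≤ C * bmoNorm n f := by
  obtain ⟨m, rfl⟩ : ∃ m, n = m + 1 := ⟨n - 1, by omega⟩
  obtain ⟨L1, R1, h1⟩ := mk_BL hχ hχc
  obtain ⟨L2, R2, h2⟩ := mk_BL hψ hψc
  have hD : Dat χ ψ (max 1 (max R1 R2)) (max L1 L2) :=
    ⟨le_max_left _ _, h1 _ _ (le_max_left _ _) ((le_max_left _ _).trans (le_max_right _ _)),
      h2 _ _ (le_max_right _ _) ((le_max_right _ _).trans (le_max_right _ _)), hψint⟩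
  obtain ⟨Cb, hb⟩ := hD.b_BL
  obtain ⟨Q, -, hQ⟩ := hD.bmo hb
  refine ⟨Q, fun f ⟨M, hM⟩ ⟨K, hK⟩ => ?_⟩
  have hK' : ∀ x y, |f x - f y| ≤ |K| * ‖x - y‖ := fun x y =>
    (hK x y).trans (by gcongr; exact le_abs_self K)
  exact ⟨_, fun x => hD.pv H hH hM (abs_nonneg K) hK' x, hQ f M |K| hM (abs_nonneg K) hK'⟩
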